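/- Let p be a prime and n ≥ 1. Let M be an analytic submanifold of ℚ_p^n, let v ≥ n+1, and suppose that w(y₀) ≤ v for some y₀ ∈ M. Then for almost every point y in a neighbourhood of y₀ in M (with respect to the smooth measure class on M) one has w(y) ≤ v. -/

import Mathlib

open MeasureTheory Metric
open scoped ENNReal NNReal

namespace PadicDioph

variable (p : ℕ) [Fact p.Prime]

noncomputable instance : MeasurableSpace ℚ_[p] := borel _
instance : BorelSpace ℚ_[p] := ⟨rfl⟩

/-- Membership in `ℤ[1/p]`, viewed inside `ℚ`. -/
def IsZInvP (q : ℚ) : Prop := ∃ (z : ℤ) (k : ℕ), q = (z : ℚ) / (p : ℚ) ^ k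

/-- Sup norm (max of archimedean absolute values) of a finite tuple of rationals. -/
noncomputable def supNormR {m : ℕ} (q : Fin m → ℚ) : ℝ := ⨆ i, |(q i : ℝ)|

/-- Sup of the `p`-adic absolute values of a finite tuple of rationals. -/
noncomputable def supNormP {m : ℕ} (q : Fin m → ℚ) : ℝ := ⨆ i, ‖((q i : ℚ_[p]))‖

/-- Sup norm of an integer tuple together with an extra integer coordinate. -/
noncomputable def supNormZ {n : ℕ} (q0 : ℤ) (q : Fin n → ℤ) : ℝ :=
  max |(q0 : ℝ)| (⨆ i, |((q i : ℤ) : ℝ)|)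

/-- The classical Diophantine exponent `w(y)` of `y ∈ ℚ_p^n`: the supremum of all `v > 0`
such that `|q₀ + q·y|_p ≤ ‖(q₀,q)‖_∞^{-v}` has infinitely many integer solutions. -/
noncomputable def wExp {n : ℕ} (y : Fin n → ℚ_[p]) : ℝ≥0∞ :=
  ⨆ (v : ℝ) (_ : 0 < v ∧
    {qq : ℤ × (Fin n → ℤ) |
      ‖((qq.1 : ℚ_[p]) + ∑ i, (qq.2 i : ℚ_[p]) * y i)‖ ≤
        (supNormZ qq.1 qq.2) ^ (-v)}.Infinite), ENNReal.ofReal v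

/-- `y` is very well approximable if `w(y) > n + 1`. -/
def IsVWA {n : ℕ} (y : Fin n → ℚ_[p]) : Prop :=
  ENNReal.ofReal ((n : ℝ) + 1) < wExp p y

/-- The defining condition of the exponent `w_p`: there are solutions
`q̃ = (q₀, q) ∈ ℤ[1/p]^{n+1}` of `|q·y + q₀|_p < (‖q‖_p ‖q̃‖_∞)^{-v} ‖q̃‖_∞^{-1}`
with `‖q‖_p ‖q̃‖_∞` arbitrarily large. -/
def WpCond {n : ℕ} (y : Fin n → ℚ_[p]) (v : ℝ) : Prop :=
  ∀ T : ℝ, ∃ (q0 : ℚ) (q : Fin n → ℚ),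
    IsZInvP p q0 ∧ (∀ i, IsZInvP p (q i)) ∧
    T < supNormP p q * supNormR (Fin.cons q0 q) ∧
    ‖(∑ i, (q i : ℚ_[p]) * y i) + (q0 : ℚ_[p])‖ <
      (supNormP p q * supNormR (Fin.cons q0 q)) ^ (-v) * (supNormR (Fin.cons q0 q))⁻¹

/-- The exponent `w_p(y)`. -/
noncomputable def wpExp {n : ℕ} (y : Fin n → ℚ_[p]) : ℝ≥0∞ :=
  ⨆ (v : ℝ) (_ : 0 < v ∧ WpCond p y v), ENNReal.ofReal v

/-- `Π_+` of a tuple of rationals: the product of `|q_i|_∞` over the nonzero coordinates. -/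
noncomputable def piPlusQ {m : ℕ} (q : Fin m → ℚ) : ℝ :=
  ∏ i, (if q i = 0 then 1 else |(q i : ℝ)|)

/-- `Π_+` of `(q₀, q)` with integer coordinates. -/
noncomputable def piPlusZ {n : ℕ} (q0 : ℤ) (q : Fin n → ℤ) : ℝ :=
  (if q0 = 0 then 1 else |(q0 : ℝ)|) * ∏ i, (if q i = 0 then 1 else |((q i : ℤ) : ℝ)|)

/-- `y ∈ ℚ_p^n` is very well multiplicatively approximable. -/
def IsVWMA {n : ℕ} (y : Fin n → ℚ_[p]) : Prop :=
  ∃ ε : ℝ, 0 < ε ∧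
    {qq : ℤ × (Fin n → ℤ) |
      ‖((qq.1 : ℚ_[p]) + ∑ i, (qq.2 i : ℚ_[p]) * y i)‖ ≤
        (piPlusZ qq.1 qq.2) ^ (-(1 + ε))}.Infinite

/-- A measure on `ℚ_p^n` is strongly extremal if almost every point is not VWMA. -/
def StronglyExtremal {n : ℕ} (μ : Measure (Fin n → ℚ_[p])) : Prop :=
  ∀ᵐ y ∂μ, ¬ IsVWMA p y

/-- `δ(g_t u_y D^{n+1})` for the one-parameter flow: `g_t` has `p`-adic component
`diag(p^{-t},1,…,1)` and archimedean component `p^{-t/(n+1)}·Id`. -/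
noncomputable def deltaOne {n : ℕ} (y : Fin n → ℚ_[p]) (t : ℕ) : ℝ :=
  sInf { c : ℝ | ∃ qt : Fin (n + 1) → ℚ, (∀ i, IsZInvP p (qt i)) ∧ qt ≠ 0 ∧
    c = ((p : ℝ) ^ (-(t : ℝ) / ((n : ℝ) + 1)) * supNormR qt) *
        max (‖(((p : ℚ_[p]) ^ t)⁻¹ * ((qt 0 : ℚ_[p]) + ∑ i : Fin n, (qt i.succ : ℚ_[p]) * y i))‖)
            (⨆ i : Fin n, ‖((qt i.succ : ℚ_[p]))‖) }

/-- The exponent `γ(y)`. -/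
noncomputable def gammaExp {n : ℕ} (y : Fin n → ℚ_[p]) : ℝ :=
  sSup {c : ℝ | 0 ≤ c ∧ ∀ N : ℕ, ∃ t : ℕ, N ≤ t ∧
    deltaOne p y t ≤ (p : ℝ) ^ (-(c * (t : ℝ)))}

/-- `δ(g_t u_y D^{n+1})` for the multiparameter flow: for `t = (t₀,…,t_n)` with
`T = Σ tᵢ`, the `p`-adic component of `g_t` is `diag(p^{-T},1,…,1)` and the archimedean
component is `diag(p^{-t₀},…,p^{-t_n})`. -/
noncomputable def deltaMulti {n : ℕ} (y : Fin n → ℚ_[p]) (t : Fin (n + 1) → ℕ) : ℝ :=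
  sInf { c : ℝ | ∃ qt : Fin (n + 1) → ℚ, (∀ i, IsZInvP p (qt i)) ∧ qt ≠ 0 ∧
    c = (⨆ i, (p : ℝ) ^ (-((t i : ℝ))) * |(qt i : ℝ)|) *
        max (‖(((p : ℚ_[p]) ^ (∑ i, t i))⁻¹ *
              ((qt 0 : ℚ_[p]) + ∑ i : Fin n, (qt i.succ : ℚ_[p]) * y i))‖)
            (⨆ i : Fin n, ‖((qt i.succ : ℚ_[p]))‖) }

/-- The support of a measure on a metric space. -/
def measSupp {X : Type*} [MetricSpace X] [MeasurableSpace X] (μ : Measure X) : Set X :=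
  {x | ∀ r : ℝ, 0 < r → 0 < μ (ball x r)}

/-- `‖f‖_{μ,B}`. -/
noncomputable def muSupNorm {X : Type*} [MetricSpace X] [MeasurableSpace X]
    (μ : Measure X) (B : Set X) (f : X → ℚ_[p]) : ℝ :=
  sSup {c : ℝ | 0 < μ {x ∈ B | c < ‖f x‖}}

/-- `f` is `(C, α)`-good on `V` with respect to `μ`. -/
def IsGoodOn {X : Type*} [MetricSpace X] [MeasurableSpace X] (μ : Measure X)
    (C a : ℝ) (V : Set X) (f : X → ℚ_[p]) : Prop :=
  ∀ (x₀ : X) (r : ℝ), 0 < r → x₀ ∈ measSupp μ → ball x₀ r ⊆ V →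
    ∀ ε : ℝ, 0 < ε →
      μ {x ∈ ball x₀ r | ‖f x‖ < ε} ≤
        ENNReal.ofReal (C * (ε / muSupNorm p μ (ball x₀ r) f) ^ a) * μ (ball x₀ r)

/-- A metric space is Besicovitch: any family of balls whose centers exhaust a bounded
set `A` admits a countable subfamily covering `A` with multiplicity at most `N`. -/
def IsBesicovitch (X : Type*) [MetricSpace X] : Prop :=
  ∃ N : ℕ, ∀ (A : Set X), Bornology.IsBounded A →
    ∀ F : Set (X × ℝ), (∀ b ∈ F, 0 < b.2) → (∀ x ∈ A, ∃ r : ℝ, (x, r) ∈ F) →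
      ∃ S ⊆ F, S.Countable ∧ (∀ x ∈ A, ∃ b ∈ S, x ∈ ball b.1 b.2) ∧
        ∀ x : X, {b ∈ S | x ∈ ball b.1 b.2}.encard ≤ N

/-- `μ` is `D`-Federer on the open set `U`. -/
def IsDFedererOn {X : Type*} [MetricSpace X] [MeasurableSpace X]
    (μ : Measure X) (D : ℝ) (U : Set X) : Prop :=
  ∀ x ∈ measSupp μ, ∀ r : ℝ, 0 < r → ball x (3 * r) ⊆ U →
    μ (ball x (3 * r)) ≤ ENNReal.ofReal D * μ (ball x r)

/-- `μ` is Federer. -/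
def IsFederer {X : Type*} [MetricSpace X] [MeasurableSpace X] (μ : Measure X) : Prop :=
  ∀ᵐ x ∂μ, ∃ U : Set X, IsOpen U ∧ x ∈ U ∧ 0 < μ U ∧ ∃ D : ℝ, 0 < D ∧ IsDFedererOn μ D U

/-- The pair `(f, μ)` is good: `μ`-a.e. point has a neighbourhood `V` and `C, α > 0`
such that every affine combination `c₀ + Σ cᵢ fᵢ` is `(C, α)`-good on `V` w.r.t. `μ`. -/
def GoodPair {X : Type*} [MetricSpace X] [MeasurableSpace X] {n : ℕ}
    (f : X → (Fin n → ℚ_[p])) (μ : Measure X) : Prop :=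
  ∀ᵐ x ∂μ, ∃ V : Set X, IsOpen V ∧ x ∈ V ∧ ∃ C a : ℝ, 0 < C ∧ 0 < a ∧
    ∀ c0 : ℚ_[p], ∀ c : Fin n → ℚ_[p],
      IsGoodOn p μ C a V (fun x => c0 + ∑ i, c i * f x i)

/-- `(f, μ)` is nonplanar in the affine subspace `L`. -/
def NonplanarIn {X : Type*} [MetricSpace X] [MeasurableSpace X] {n : ℕ}
    (f : X → (Fin n → ℚ_[p])) (μ : Measure X)
    (L : AffineSubspace ℚ_[p] (Fin n → ℚ_[p])) : Prop :=
  ∀ B : Set X, IsOpen B → B.Nonempty → 0 < μ B →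
    affineSpan ℚ_[p] (f '' (B ∩ measSupp μ)) = L

/-- `f` is nondegenerate in the affine subspace `L` at `x`: `f` takes values in `L` and the
span of the partial derivatives of `f` at `x` up to some order is the linear part of `L`. -/
def NondegenerateAt {d n : ℕ} (f : (Fin d → ℚ_[p]) → (Fin n → ℚ_[p]))
    (L : AffineSubspace ℚ_[p] (Fin n → ℚ_[p])) (x : Fin d → ℚ_[p]) : Prop :=
  (∀ u, f u ∈ L) ∧ ∃ m : ℕ,
    Submodule.span ℚ_[p]
      {v : Fin n → ℚ_[p] | ∃ j : ℕ, j ≤ m ∧ 1 ≤ j ∧ ∃ vs : Fin j → (Fin d → ℚ_[p]),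
        v = iteratedFDeriv ℚ_[p] j f x vs} = L.direction

/-- An analytic chart of the `d`-dimensional submanifold `M` of `ℚ_p^n`: an analytic map
`f` on an open set `U`, injective on `U`, immersive, a homeomorphism onto its image, whose
image is a relatively open subset of `M`. -/
def IsChart (d n : ℕ) (M : Set (Fin n → ℚ_[p]))
    (U : Set (Fin d → ℚ_[p])) (f : (Fin d → ℚ_[p]) → (Fin n → ℚ_[p])) : Prop :=
  IsOpen U ∧ AnalyticOnNhd ℚ_[p] f U ∧ Set.InjOn f U ∧
  (∀ x ∈ U, Function.Injective (fderiv ℚ_[p] f x)) ∧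
  (∀ x ∈ U, ∀ V : Set (Fin d → ℚ_[p]), IsOpen V → x ∈ V →
      ∃ W : Set (Fin n → ℚ_[p]), IsOpen W ∧ f x ∈ W ∧ W ∩ f '' U ⊆ f '' (V ∩ U)) ∧
  ∃ W : Set (Fin n → ℚ_[p]), IsOpen W ∧ M ∩ W = f '' U

/-- `M` is a `d`-dimensional analytic submanifold of `ℚ_p^n`. -/
def IsAnalyticSubmanifold (d n : ℕ) (M : Set (Fin n → ℚ_[p])) : Prop :=
  M.Nonempty ∧ ∀ y ∈ M, ∃ (U : Set (Fin d → ℚ_[p])) (f : (Fin d → ℚ_[p]) → (Fin n → ℚ_[p])),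
    IsChart p d n M U f ∧ y ∈ f '' U

/-!
The proof shows that `w (f x) ≤ w (f x₀)` for almost every `x` near `x₀`, for any analytic `f`. The
method is Kleinbock and Margulis' quantitative nondivergence, applied along lines through `x₀`.

On a line, `(1, f)` becomes a curve given by convergent power series on the unit ball of `ℚ_p`. For
`x` in that ball, the integer vectors whose linear form at `x` is at most `p ^ (-T)` form a lattice,
and every rational subspace `V` cuts out a sublattice with a covolume. As a function of `x`, this
covolume is controlled from below by a single integer linear form along the curve. Such forms are
power series of Weierstrass degree bounded independently of `V` and `T`, so the set where one of
them is much smaller than at some given point is small. If `w (f x₀) < v`, then for large `T`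
Minkowski's theorem bounds the covolumes at `x₀` from below, and nondivergence excludes short
vectors in the lattice outside a small set of `x`. Letting `T` run through an arithmetic
progression, Borel–Cantelli gives `w ≤ w (f x₀)` almost everywhere on the line.

Finally, by Fubini some unit `t` has the property that `t • e` is good for almost every `e`; since
multiplication by `t` preserves null sets, almost every point near `x₀` is good.
-/

/-! ### Maximal minors of integer matrices -/

section Minors

variable {ι κ : Type*} [Fintype κ] [DecidableEq κ]

theorem exists_isUnit_submatrix_of_linearIndependent [Finite ι] {K : Type*} [Field K]
    {M : Matrix κ ι K} (hM : LinearIndependent K M) : ∃ I : κ → ι, IsUnit (M.submatrix id I) := by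
  have := Fintype.ofFinite ι
  have hrank : Module.finrank K (Submodule.span K (Set.range M.col)) = Fintype.card κ := by
    rw [← Matrix.rank_eq_finrank_span_cols]
    exact hM.rank_matrix
  obtain ⟨f, hf, -, hli⟩ := Submodule.exists_fun_fin_finrank_span_eq K (Set.range M.col)
  choose I hI using hf
  let e : κ ≃ Fin (Module.finrank K (Submodule.span K (Set.range M.col))) :=
    Fintype.equivFinOfCardEq hrank.symm
  refine ⟨I ∘ e, Matrix.linearIndependent_cols_iff_isUnit.1 ?_⟩
  have hcol : (M.submatrix id (I ∘ e)).col = f ∘ e := funext fun c => hI (e c)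
  exact hcol ▸ hli.comp e e.injective

theorem exists_det_submatrix_ne_zero [Finite ι] {b : Matrix κ ι ℤ} (hb : LinearIndependent ℤ b) :
    ∃ I : κ → ι, (b.submatrix id I).det ≠ 0 := by
  have hinj : LinearMap.ker ((Algebra.linearMap ℤ ℚ).compLeft ι) = ⊥ :=
    LinearMap.ker_eq_bot.2 fun x y hxy => funext fun k => Int.cast_injective (congrFun hxy k)
  have hbQ : LinearIndependent ℚ (b.map (Int.castRingHom ℚ)) :=
    (LinearIndependent.iff_fractionRing ℤ ℚ).1 (hb.map' _ hinj)
  obtain ⟨I, hI⟩ := exists_isUnit_submatrix_of_linearIndependent hbQ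
  refine ⟨I, fun h0 => ((Matrix.isUnit_iff_isUnit_det _).1 hI).ne_zero ?_⟩
  rw [Matrix.submatrix_map, ← RingHom.mapMatrix_apply, ← RingHom.map_det, h0, map_zero]

variable [Fintype ι]

/-- The largest absolute value of a maximal minor of `b` (columns may repeat, which only adds
zeros). It is a sup-norm version of the covolume of the lattice spanned by the rows of `b`. -/
def maxMinor (b : Matrix κ ι ℤ) : ℕ :=
  Finset.univ.sup fun I : κ → ι => (b.submatrix id I).det.natAbs

theorem natAbs_det_submatrix_le_maxMinor (b : Matrix κ ι ℤ) (I : κ → ι) :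
    (b.submatrix id I).det.natAbs ≤ maxMinor b :=
  Finset.le_sup (f := fun I : κ → ι => (b.submatrix id I).det.natAbs) (Finset.mem_univ I)

theorem exists_natAbs_det_submatrix_eq_maxMinor (b : Matrix κ ι ℤ) (h : 0 < maxMinor b) :
    ∃ I : κ → ι, (b.submatrix id I).det.natAbs = maxMinor b := by
  obtain ⟨I, -, -⟩ := Finset.lt_sup_iff.1 h
  obtain ⟨I, -, hI⟩ := Finset.exists_mem_eq_sup Finset.univ ⟨I, Finset.mem_univ I⟩
    fun I : κ → ι => (b.submatrix id I).det.natAbs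
  exact ⟨I, hI.symm⟩

theorem maxMinor_mul (A : Matrix κ κ ℤ) (b : Matrix κ ι ℤ) :
    maxMinor (A * b) = A.det.natAbs * maxMinor b := by
  rw [maxMinor, maxMinor, Finset.apply_sup_eq_sup_comp (fun x : ℕ => A.det.natAbs * x)
    (fun x y => by simp) (by simp)]
  congr 1
  ext I
  rw [Function.comp_apply, ← Int.natAbs_mul, ← Matrix.det_mul, Matrix.submatrix_mul A b id id I
    Function.bijective_id, Matrix.submatrix_id_id]

theorem maxMinor_cons_le {j : ℕ} (w : ι → ℤ) (b : Fin j → ι → ℤ) :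
    (maxMinor (Fin.cons w b : Fin (j + 1) → ι → ℤ) : ℝ) ≤ (j + 1) * ‖w‖ * maxMinor b := by
  rcases Nat.eq_zero_or_pos (maxMinor (Fin.cons w b : Fin (j + 1) → ι → ℤ)) with h | h
  · rw [h, Nat.cast_zero]
    positivity
  obtain ⟨I, hI⟩ := exists_natAbs_det_submatrix_eq_maxMinor _ h
  have hterm (i : Fin (j + 1)) : |(-1 : ℝ) ^ (i : ℕ) * (w (I i) : ℝ) *
      ((Matrix.submatrix b id (I ∘ i.succAbove)).det : ℝ)| ≤ ‖w‖ * maxMinor b := by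
    rw [abs_mul, abs_mul, abs_pow, abs_neg, abs_one, one_pow, one_mul]
    refine mul_le_mul ?_ ?_ (abs_nonneg _) (norm_nonneg _)
    · simpa only [Int.norm_eq_abs] using norm_le_pi_norm w (I i)
    · rw [← Int.cast_abs, ← Nat.cast_natAbs]
      exact_mod_cast natAbs_det_submatrix_le_maxMinor b (I ∘ i.succAbove)
  calc (maxMinor (Fin.cons w b : Fin (j + 1) → ι → ℤ) : ℝ)
      = |∑ i : Fin (j + 1), (-1 : ℝ) ^ (i : ℕ) * (w (I i) : ℝ) *
          ((Matrix.submatrix b id (I ∘ i.succAbove)).det : ℝ)| := by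
        rw [← hI, Matrix.det_succ_row_zero, Nat.cast_natAbs, Int.cast_abs]
        push_cast
        rfl
    _ ≤ ∑ _i : Fin (j + 1), ‖w‖ * maxMinor b :=
        (Finset.abs_sum_le_sum_abs _ _).trans (Finset.sum_le_sum fun i _ => hterm i)
    _ = (j + 1) * ‖w‖ * maxMinor b := by
        rw [Finset.sum_const, Finset.card_univ, Fintype.card_fin, nsmul_eq_mul]
        push_cast
        ring

theorem maxMinor_updateRow_smul (b : Matrix κ ι ℤ) (i : κ) (c : ℤ) :
    maxMinor (b.updateRow i (c • b i)) = c.natAbs * maxMinor b := by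
  have h : b.updateRow i (c • b i) = Matrix.diagonal (Function.update 1 i c) * b := by
    ext a k
    rw [Matrix.diagonal_mul]
    obtain rfl | ha := eq_or_ne a i
    · simp
    · simp [ha]
  rw [h, maxMinor_mul, Matrix.det_diagonal, Finset.prod_update_of_mem (Finset.mem_univ i)]
  simp

theorem maxMinor_add_smul_row (b : Matrix κ ι ℤ) (i : κ) (c : κ → ℤ) (hc : c i = 0) :
    maxMinor (fun a => b a + c a • b i) = maxMinor b := by
  unfold maxMinor
  congr 1
  ext I
  exact congrArg Int.natAbs
    (Matrix.det_eq_of_forall_row_eq_smul_add_const c i hc fun _ _ => rfl)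

theorem maxMinor_pos_iff {b : Matrix κ ι ℤ} : 0 < maxMinor b ↔ LinearIndependent ℤ b := by
  constructor
  · intro h
    obtain ⟨I, hI⟩ := exists_natAbs_det_submatrix_eq_maxMinor b h
    have hli : LinearIndependent ℤ (LinearMap.funLeft ℤ ℤ I ∘ b) :=
      Matrix.linearIndependent_rows_of_det_ne_zero (A := b.submatrix id I)
        (Int.natAbs_pos.1 (hI ▸ h))
    exact hli.of_comp
  · intro h
    obtain ⟨I, hI⟩ := exists_det_submatrix_ne_zero h
    exact (Int.natAbs_pos.2 hI).trans_le (natAbs_det_submatrix_le_maxMinor b I)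

/-- The pigeonhole principle in the quotient of `ℤ^κ` by the rows of `B`, which has `|det B|`
elements. -/
theorem exists_vecMul_ne_zero_of_natAbs_det_lt {B : Matrix κ κ ℤ} (hB : B.det ≠ 0) {s : ℕ}
    (hs : B.det.natAbs < (s + 1) ^ Fintype.card κ) :
    ∃ z : κ → ℤ, Matrix.vecMul z B ≠ 0 ∧ ∀ i, |Matrix.vecMul z B i| ≤ s := by
  have hli : LinearIndependent ℤ B.row := Matrix.linearIndependent_rows_of_det_ne_zero hB
  let N := Submodule.span ℤ (Set.range B.row)
  have hcard : Nat.card ((κ → ℤ) ⧸ N) = B.det.natAbs := by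
    have hbasis : ((↑) ∘ Module.Basis.span hli : κ → κ → ℤ) = B.row :=
      funext fun i => congrArg Subtype.val (Module.Basis.span_apply hli i)
    rw [← Submodule.natAbs_det_basis_change (Pi.basisFun ℤ κ) N (Module.Basis.span hli), hbasis,
      Pi.basisFun_det]
    rfl
  have : Finite ((κ → ℤ) ⧸ N) :=
    Nat.finite_of_card_ne_zero (hcard ▸ Int.natAbs_ne_zero.2 hB)
  have := Fintype.ofFinite ((κ → ℤ) ⧸ N)
  obtain ⟨x, y, hxy, hmk⟩ := Fintype.exists_ne_map_eq_of_card_lt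
    (fun x : κ → Fin (s + 1) => (Submodule.Quotient.mk fun i => ((x i : ℕ) : ℤ) : (κ → ℤ) ⧸ N))
    (by rw [← Nat.card_eq_fintype_card, hcard]; simpa using hs)
  obtain ⟨z, hz⟩ := (Submodule.mem_span_range_iff_exists_fun ℤ).1
    ((Submodule.Quotient.eq N).1 hmk)
  replace hz (i : κ) : Matrix.vecMul z B i = (x i : ℕ) - (y i : ℕ) :=
    congrFun ((Matrix.vecMul_eq_sum z B).trans hz) i
  refine ⟨z, fun h => hxy <| funext fun i => ?_, fun i => ?_⟩
  · have := hz i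
    rw [h, Pi.zero_apply] at this
    omega
  · rw [hz, abs_le]
    omega

/-- By Cramer's rule, a combination of the rows of `b` that is small in the columns of a maximal
minor of largest absolute value is small in all columns. -/
theorem abs_vecMul_le_of_natAbs_det_eq_maxMinor {b : Matrix κ ι ℤ} {I : κ → ι}
    (hI : (b.submatrix id I).det.natAbs = maxMinor b) (hb : 0 < maxMinor b) {z : κ → ℤ} {s : ℕ}
    (hz : ∀ i, |Matrix.vecMul z b (I i)| ≤ s) (k : ι) :
    |Matrix.vecMul z b k| ≤ Fintype.card κ * s := by
  set B := b.submatrix id I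
  have hcramer (c : κ) : |B.cramer (b.col k) c| ≤ maxMinor b := by
    have hcol : B.updateCol c (b.col k) = b.submatrix id (Function.update I c k) := by
      ext a c'
      obtain rfl | hc := eq_or_ne c' c
      · simp
      · simp [hc, B]
    rw [Matrix.cramer_apply, hcol, Int.abs_eq_natAbs]
    exact_mod_cast natAbs_det_submatrix_le_maxMinor b _
  have hdet : B.det * Matrix.vecMul z b k = Matrix.vecMul z B ⬝ᵥ B.cramer (b.col k) := by
    rw [← Matrix.dotProduct_mulVec, Matrix.mulVec_cramer, dotProduct_smul, smul_eq_mul]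
    rfl
  have hle : (maxMinor b : ℤ) * |Matrix.vecMul z b k| ≤ maxMinor b * (Fintype.card κ * s) :=
    calc (maxMinor b : ℤ) * |Matrix.vecMul z b k|
        = |∑ c, Matrix.vecMul z B c * B.cramer (b.col k) c| := by
          rw [← hI, ← Int.abs_eq_natAbs, ← abs_mul, hdet, dotProduct]
      _ ≤ ∑ _c : κ, (s : ℤ) * maxMinor b :=
          (Finset.abs_sum_le_sum_abs _ _).trans <| Finset.sum_le_sum fun c _ => by
            rw [abs_mul]
            exact mul_le_mul (hz c) (hcramer c) (abs_nonneg _) (Int.natCast_nonneg s)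
      _ = maxMinor b * (Fintype.card κ * s) := by
          rw [Finset.sum_const, Finset.card_univ, nsmul_eq_mul]
          ring
  exact le_of_mul_le_mul_left hle (by exact_mod_cast hb)

/-- Minkowski's first theorem, with a crude constant. -/
theorem exists_vecMul_ne_zero_norm_pow_le [Nonempty κ] {b : Matrix κ ι ℤ} (hb : 0 < maxMinor b) :
    ∃ z : κ → ℤ, Matrix.vecMul z b ≠ 0 ∧
      ‖Matrix.vecMul z b‖ ^ Fintype.card κ ≤
        (Fintype.card κ : ℝ) ^ Fintype.card κ * maxMinor b := by
  have hcard : Fintype.card κ ≠ 0 := Fintype.card_ne_zero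
  obtain ⟨I, hI⟩ := exists_natAbs_det_submatrix_eq_maxMinor b hb
  set s := Nat.nthRoot (Fintype.card κ) (maxMinor b)
  obtain ⟨z, hz0, hz⟩ := exists_vecMul_ne_zero_of_natAbs_det_lt (s := s)
    (Int.natAbs_pos.1 (hI ▸ hb)) (by rw [hI]; exact Nat.lt_pow_nthRoot_add_one hcard _)
  have hnorm : ‖Matrix.vecMul z b‖ ≤ Fintype.card κ * s := by
    refine (pi_norm_le_iff_of_nonneg (by positivity)).2 fun k => ?_
    rw [Int.norm_eq_abs]
    exact_mod_cast abs_vecMul_le_of_natAbs_det_eq_maxMinor hI hb hz k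
  refine ⟨z, fun h => hz0 (funext fun c => congrFun h (I c)), ?_⟩
  calc ‖Matrix.vecMul z b‖ ^ Fintype.card κ
      ≤ (Fintype.card κ * s : ℝ) ^ Fintype.card κ := by gcongr
    _ = (Fintype.card κ : ℝ) ^ Fintype.card κ * ((s ^ Fintype.card κ : ℕ) : ℝ) := by
        rw [mul_pow, Nat.cast_pow]
    _ ≤ (Fintype.card κ : ℝ) ^ Fintype.card κ * maxMinor b := by
        gcongr
        exact Nat.pow_nthRoot_le (.inl hcard)

end Minors

/-! ### Covolumes of lattices of approximate zeros -/

section Covolume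

variable {p}

theorem one_le_natAbs_mul_norm_intCast {z : ℤ} (hz : z ≠ 0) :
    1 ≤ (z.natAbs : ℝ) * ‖(z : ℚ_[p])‖ := by
  have hp : (0 : ℝ) < p := mod_cast (Fact.out : p.Prime).pos
  have hle : p ^ padicValInt p z ≤ z.natAbs :=
    Nat.le_of_dvd (Int.natAbs_pos.2 hz) pow_padicValNat_dvd
  rw [Padic.norm_eq_zpow_neg_valuation (Int.cast_ne_zero.2 hz), Padic.valuation_intCast, zpow_neg,
    zpow_natCast, ← div_eq_mul_inv, le_div_iff₀ (by positivity), one_mul]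
  exact_mod_cast hle

theorem norm_sum_intCast_mul_le {κ : Type*} [Fintype κ] (z : κ → ℤ) (x : κ → ℚ_[p]) :
    ‖∑ k, (z k : ℚ_[p]) * x k‖ ≤ ‖x‖ := by
  refine IsUltrametricDist.norm_sum_le_of_forall_le_of_nonneg (norm_nonneg _) fun k _ => ?_
  rw [norm_mul]
  exact (mul_le_of_le_one_left (norm_nonneg _) (Padic.norm_int_le_one _)).trans
    (norm_le_pi_norm x k)

/-- Multiply by the adjugate, whose entries are integers. -/
theorem norm_det_mul_norm_le {κ : Type*} [Fintype κ] [DecidableEq κ] (A : Matrix κ κ ℤ)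
    (x : κ → ℚ_[p]) :
    ‖(A.det : ℚ_[p])‖ * ‖x‖ ≤ ‖(A.map (Int.castRingHom ℚ_[p])).mulVec x‖ := by
  set A' := (Int.castRingHom ℚ_[p]).mapMatrix A
  have hdet : A'.det = A.det := ((Int.castRingHom ℚ_[p]).map_det A).symm
  have hadj : A'.adjugate.mulVec (A'.mulVec x) = (A.det : ℚ_[p]) • x := by
    rw [Matrix.mulVec_mulVec, Matrix.adjugate_mul, Matrix.smul_mulVec, Matrix.one_mulVec, hdet]
  rw [← norm_smul, ← hadj, ← RingHom.map_adjugate]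
  exact (pi_norm_le_iff_of_nonneg (norm_nonneg _)).2 fun i =>
    norm_sum_intCast_mul_le (A.adjugate i) (A'.mulVec x)

theorem exists_pow_eq_pow_mul_norm {x₀ : ℚ_[p]} {T : ℕ} (h : (p : ℝ) ^ (-(T : ℤ)) < ‖x₀‖) :
    ∃ N : ℕ, (p : ℝ) ^ N = p ^ T * ‖x₀‖ := by
  have hp : (0 : ℝ) < p := mod_cast (Fact.out : p.Prime).pos
  have hx₀ : x₀ ≠ 0 := norm_pos_iff.1 ((zpow_pos hp _).trans h)
  rw [Padic.norm_eq_zpow_neg_valuation hx₀] at h ⊢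
  rw [zpow_lt_zpow_iff_right₀ (mod_cast (Fact.out : p.Prime).one_lt)] at h
  refine ⟨(T - x₀.valuation).toNat, ?_⟩
  rw [← zpow_natCast, ← zpow_natCast, ← zpow_add₀ hp.ne']
  congr 1
  omega

theorem norm_pow_mul_eq {x₀ : ℚ_[p]} {N T : ℕ} (hN : (p : ℝ) ^ N = p ^ T * ‖x₀‖) :
    ‖(p : ℚ_[p]) ^ N * x₀‖ = (p : ℝ) ^ (-(T : ℤ)) := by
  have hp : (0 : ℝ) < p := mod_cast (Fact.out : p.Prime).pos
  have hx₀ : ‖x₀‖ ≠ 0 := by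
    rintro h
    rw [h, mul_zero] at hN
    exact (pow_pos hp N).ne' hN
  rw [norm_mul, norm_pow, Padic.norm_p, inv_pow, hN, mul_inv, mul_assoc, inv_mul_cancel₀ hx₀,
    mul_one, zpow_neg, zpow_natCast]

theorem exists_int_norm_sub_mul_le {x x₀ : ℚ_[p]} (hx : ‖x‖ ≤ ‖x₀‖) {N T : ℕ}
    (hN : (p : ℝ) ^ N = p ^ T * ‖x₀‖) : ∃ k : ℤ, ‖x - k * x₀‖ ≤ (p : ℝ) ^ (-(T : ℤ)) := by
  have hz : ‖x / x₀‖ ≤ 1 := by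
    rw [norm_div]
    exact div_le_one_of_le₀ hx (norm_nonneg _)
  have happr := PadicInt.appr_spec N (⟨x / x₀, hz⟩ : ℤ_[p])
  rw [← PadicInt.norm_le_pow_iff_mem_span_pow, PadicInt.norm_def] at happr
  refine ⟨PadicInt.appr (⟨x / x₀, hz⟩ : ℤ_[p]) N, ?_⟩
  have hmul : x = x / x₀ * x₀ := by
    obtain rfl | h := eq_or_ne x₀ 0
    · simpa using hx
    · rw [div_mul_cancel₀ x h]
  calc ‖x - ((PadicInt.appr (⟨x / x₀, hz⟩ : ℤ_[p]) N : ℤ) : ℚ_[p]) * x₀‖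
      = ‖x / x₀ - (PadicInt.appr (⟨x / x₀, hz⟩ : ℤ_[p]) N : ℚ_[p])‖ * ‖x₀‖ := by
        rw [← norm_mul, sub_mul, ← hmul, Int.cast_natCast]
    _ ≤ (p : ℝ) ^ (-(N : ℤ)) * ‖x₀‖ := mul_le_mul_of_nonneg_right happr (norm_nonneg _)
    _ = (p : ℝ) ^ (-(T : ℤ)) := by
        rw [← norm_pow_mul_eq hN, norm_mul, norm_pow, Padic.norm_p, inv_pow, zpow_neg, zpow_natCast]

variable {ι : Type*}

/-- The inclusion of `ℤ^ι` into `ℚ^ι`. -/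
def toRat : (ι → ℤ) →ₗ[ℤ] (ι → ℚ) := (Algebra.linearMap ℤ ℚ).compLeft ι

theorem toRat_injective : Function.Injective (toRat (ι := ι)) :=
  fun _ _ h => funext fun k => Int.cast_injective (congrFun h k)

/-- The lattice of integer points of a rational subspace. -/
def intPoints (V : Submodule ℚ (ι → ℚ)) : Submodule ℤ (ι → ℤ) :=
  (V.restrictScalars ℤ).comap toRat

theorem linearIndependent_toRat_iff {κ : Type*} {b : κ → ι → ℤ} :
    LinearIndependent ℚ (fun i => toRat (b i)) ↔ LinearIndependent ℤ b := by
  rw [← LinearIndependent.iff_fractionRing ℤ ℚ]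
  exact LinearMap.linearIndependent_iff toRat (LinearMap.ker_eq_bot.2 toRat_injective)

theorem exists_smul_mem_range_toRat [Finite ι] (x : ι → ℚ) :
    ∃ (N : ℤ) (q : ι → ℤ), N ≠ 0 ∧ toRat q = (N : ℚ) • x := by
  obtain ⟨N, hN⟩ := IsLocalization.exist_integer_multiples_of_finite (nonZeroDivisors ℤ) x
  choose q hq using hN
  refine ⟨N, q, nonZeroDivisors.ne_zero N.2, funext fun k => (hq k).trans ?_⟩
  simp

theorem finrank_intPoints [Finite ι] (V : Submodule ℚ (ι → ℚ)) :
    Module.finrank ℤ (intPoints V) = Module.finrank ℚ V := by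
  let B := Module.finBasis ℤ (intPoints V)
  have hli : LinearIndependent ℚ fun i => toRat (B i : ι → ℤ) :=
    linearIndependent_toRat_iff.2
      (B.linearIndependent.map' (intPoints V).subtype (Submodule.ker_subtype _))
  have hspan : Submodule.span ℚ (Set.range fun i => toRat (B i : ι → ℤ)) = V := by
    refine le_antisymm (Submodule.span_le.2 (Set.range_subset_iff.2 fun i => (B i).2))
      fun x hx => ?_
    obtain ⟨N, q, hN, hq⟩ := exists_smul_mem_range_toRat x
    have hqV : toRat q ∈ V := hq ▸ V.smul_mem _ hx
    have hx' : x = (N : ℚ)⁻¹ • toRat q := by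
      rw [hq, inv_smul_smul₀ (Int.cast_ne_zero.2 hN)]
    have hsum : ∑ i, B.repr ⟨q, hqV⟩ i • (B i : ι → ℤ) = q := by
      have h := congrArg (intPoints V).subtype (B.sum_repr ⟨q, hqV⟩)
      rwa [map_sum] at h
    rw [hx', ← hsum, map_sum]
    refine Submodule.smul_mem _ _ (Submodule.sum_mem _ fun i _ => ?_)
    rw [map_smul, ← Int.cast_smul_eq_zsmul ℚ]
    exact Submodule.smul_mem _ _ (Submodule.subset_span ⟨i, rfl⟩)
  have := finrank_span_eq_card hli
  rw [hspan] at this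
  simpa using this.symm

/-- The linearly independent systems of `dim V` integer vectors of `V` on which the linear form
`ℓ` is at most `p ^ (-T)`: bases of finite-index sublattices of the lattice
`{q ∈ intPoints V | ‖ℓ q‖ ≤ p ^ (-T)}`. -/
def approxBases (T : ℕ) (ℓ : (ι → ℤ) →ₗ[ℤ] ℚ_[p]) (V : Submodule ℚ (ι → ℚ)) :
    Set (Matrix (Fin (Module.finrank ℚ V)) ι ℤ) :=
  {b | (∀ i, b i ∈ intPoints V) ∧ (∀ i, ‖ℓ (b i)‖ ≤ (p : ℝ) ^ (-(T : ℤ))) ∧ LinearIndependent ℤ b}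

/-- The covolume, up to a constant factor, of the lattice of integer vectors of `V` on which the
linear form `ℓ` is at most `p ^ (-T)`, as a least maximal minor. -/
noncomputable def covol [Fintype ι] (T : ℕ) (ℓ : (ι → ℤ) →ₗ[ℤ] ℚ_[p])
    (V : Submodule ℚ (ι → ℚ)) : ℕ :=
  sInf (maxMinor '' approxBases T ℓ V)

variable [Fintype ι] {T : ℕ} {ℓ : (ι → ℤ) →ₗ[ℤ] ℚ_[p]} {V : Submodule ℚ (ι → ℚ)}

theorem covol_le_maxMinor {j : ℕ} (hj : j = Module.finrank ℚ V) {b : Matrix (Fin j) ι ℤ}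
    (hV : ∀ i, b i ∈ intPoints V) (hℓ : ∀ i, ‖ℓ (b i)‖ ≤ (p : ℝ) ^ (-(T : ℤ)))
    (hb : LinearIndependent ℤ b) : covol T ℓ V ≤ maxMinor b := by
  subst hj
  exact Nat.sInf_le ⟨b, ⟨hV, hℓ, hb⟩, rfl⟩

theorem covol_congr {ℓ' : (ι → ℤ) →ₗ[ℤ] ℚ_[p]}
    (h : ∀ q, ‖ℓ q - ℓ' q‖ ≤ (p : ℝ) ^ (-(T : ℤ))) : covol T ℓ V = covol T ℓ' V := by
  have hle {ℓ₁ ℓ₂ : (ι → ℤ) →ₗ[ℤ] ℚ_[p]} (h : ∀ q, ‖ℓ₁ q - ℓ₂ q‖ ≤ (p : ℝ) ^ (-(T : ℤ)))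
      (q : ι → ℤ) (hq : ‖ℓ₂ q‖ ≤ (p : ℝ) ^ (-(T : ℤ))) : ‖ℓ₁ q‖ ≤ (p : ℝ) ^ (-(T : ℤ)) := by
    simpa using (IsUltrametricDist.norm_add_le_max (ℓ₁ q - ℓ₂ q) (ℓ₂ q)).trans (max_le (h q) hq)
  have hiff (q : ι → ℤ) : ‖ℓ q‖ ≤ (p : ℝ) ^ (-(T : ℤ)) ↔ ‖ℓ' q‖ ≤ (p : ℝ) ^ (-(T : ℤ)) :=
    ⟨hle (fun q => (norm_sub_rev _ _).trans_le (h q)) q, hle h q⟩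
  simp only [covol, approxBases, hiff]

theorem covol_bot_le : covol T ℓ ⊥ ≤ 1 := by
  have h := covol_le_maxMinor (T := T) (ℓ := ℓ) (finrank_bot ℚ (ι → ℚ)).symm
    (b := Fin.elim0) (fun i => i.elim0) (fun i => i.elim0) (linearIndependent_empty_type)
  refine h.trans (Finset.sup_le fun I _ => ?_)
  simp

/-- With `i₀` a row where `ℓ` is largest, make `ℓ` small on the other rows by subtracting
multiples of the row `i₀`, and on the row `i₀` by multiplying it by a power of `p`. -/
theorem exists_mem_approxBases_maxMinor_le {b : Matrix (Fin (Module.finrank ℚ V)) ι ℤ}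
    (hV : ∀ i, b i ∈ intPoints V) (hb : LinearIndependent ℤ b) :
    ∃ b' ∈ approxBases T ℓ V,
      (maxMinor b' : ℝ) ≤ maxMinor b * max 1 ((p : ℝ) ^ T * ‖ℓ ∘ b.row‖) := by
  by_cases hall : ∀ i, ‖ℓ (b i)‖ ≤ (p : ℝ) ^ (-(T : ℤ))
  · exact ⟨b, ⟨hV, hall, hb⟩, le_mul_of_one_le_right (Nat.cast_nonneg _) (le_max_left _ _)⟩
  push Not at hall
  obtain ⟨i₁, hi₁⟩ := hall
  obtain ⟨i₀, -, hmax⟩ := Finset.exists_max_image Finset.univ (fun i => ‖ℓ (b i)‖)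
    ⟨i₁, Finset.mem_univ _⟩
  replace hmax (i) : ‖ℓ (b i)‖ ≤ ‖ℓ (b i₀)‖ := hmax i (Finset.mem_univ i)
  obtain ⟨N, hN⟩ := exists_pow_eq_pow_mul_norm (hi₁.trans_le (hmax i₁))
  choose k hk using fun i => exists_int_norm_sub_mul_le (hmax i) hN
  let c : Fin (Module.finrank ℚ V) → ℤ := Function.update (-k) i₀ 0
  let b₁ : Matrix (Fin (Module.finrank ℚ V)) ι ℤ := fun i => b i + c i • b i₀
  let b' := b₁.updateRow i₀ ((p : ℤ) ^ N • b₁ i₀)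
  have hb'₀ : b' i₀ = (p : ℤ) ^ N • b i₀ :=
    (Matrix.updateRow_self ..).trans (by
      simp only [b₁, c, Function.update_self, zero_smul, add_zero])
  have hb' {i} (hi : i ≠ i₀) : b' i = b i - k i • b i₀ :=
    (Matrix.updateRow_ne hi).trans (by
      simp only [b₁, c, Function.update_of_ne hi, Pi.neg_apply, neg_smul, ← sub_eq_add_neg])
  have hminor : maxMinor b' = p ^ N * maxMinor b := by
    rw [maxMinor_updateRow_smul, maxMinor_add_smul_row b i₀ c (by simp [c])]
    simp [Int.natAbs_pow]
  refine ⟨b', ⟨fun i => ?_, fun i => ?_, ?_⟩, ?_⟩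
  · obtain rfl | hi := eq_or_ne i i₀
    · exact hb'₀ ▸ (intPoints V).smul_mem _ (hV i)
    · exact hb' hi ▸ (intPoints V).sub_mem (hV i) ((intPoints V).smul_mem _ (hV i₀))
  · obtain rfl | hi := eq_or_ne i i₀
    · rw [hb'₀, map_smul, zsmul_eq_mul, Int.cast_pow, Int.cast_natCast, norm_pow_mul_eq hN]
    · rw [hb' hi, map_sub, map_smul, zsmul_eq_mul]
      exact hk i
  · rw [← maxMinor_pos_iff, hminor]
    exact Nat.mul_pos (pow_pos (Fact.out : p.Prime).pos _) (maxMinor_pos_iff.2 hb)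
  · rw [hminor, Nat.cast_mul, mul_comm, Nat.cast_pow, hN]
    gcongr
    refine le_max_of_le_right ?_
    gcongr
    exact norm_le_pi_norm (ℓ ∘ b.row) i₀

variable (V) in
/-- A `ℤ`-basis of the lattice of integer points of `V`. -/
noncomputable def intBasis : Module.Basis (Fin (Module.finrank ℚ V)) ℤ (intPoints V) :=
  (Module.finBasis ℤ (intPoints V)).reindex (finCongr (finrank_intPoints V))

variable (V) in
/-- The matrix whose rows are the vectors of `intBasis V`. -/
noncomputable def intBasisMatrix : Matrix (Fin (Module.finrank ℚ V)) ι ℤ :=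
  Matrix.of fun i => (intBasis V i : ι → ℤ)

theorem linearIndependent_intBasisMatrix : LinearIndependent ℤ (intBasisMatrix V) :=
  (intBasis V).linearIndependent.map' (intPoints V).subtype (Submodule.ker_subtype _)

theorem exists_eq_mul_intBasisMatrix {b : Matrix (Fin (Module.finrank ℚ V)) ι ℤ}
    (hb : ∀ i, b i ∈ intPoints V) :
    ∃ A : Matrix (Fin (Module.finrank ℚ V)) (Fin (Module.finrank ℚ V)) ℤ,
      b = A * intBasisMatrix V := by
  refine ⟨Matrix.of fun i j => (intBasis V).repr ⟨b i, hb i⟩ j, ?_⟩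
  refine funext fun i => ?_
  have h := congrArg (intPoints V).subtype ((intBasis V).sum_repr ⟨b i, hb i⟩)
  rw [map_sum] at h
  rw [Matrix.mul_apply_eq_vecMul, Matrix.vecMul_eq_sum]
  exact h.symm

omit [Fintype ι] in
theorem map_mul_row {κ κ' : Type*} [Fintype κ] (ℓ : (ι → ℤ) →ₗ[ℤ] ℚ_[p]) (A : Matrix κ' κ ℤ)
    (b : Matrix κ ι ℤ) (i : κ') : ℓ ((A * b) i) = ∑ k, (A i k : ℚ_[p]) * ℓ (b k) := by
  rw [Matrix.mul_apply_eq_vecMul, Matrix.vecMul_eq_sum, map_sum]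
  exact Finset.sum_congr rfl fun k _ => (map_smul ℓ (A i k) (b k)).trans (zsmul_eq_mul ..)

/-- Write `b = A * intBasisMatrix V`. By the product formula `1 ≤ |det A| * ‖det A‖`, the values
of `ℓ` at the integer basis are at most `|det A| * p ^ (-T)`. -/
theorem maxMinor_mul_max_le {b : Matrix (Fin (Module.finrank ℚ V)) ι ℤ}
    (hb : b ∈ approxBases T ℓ V) :
    maxMinor (intBasisMatrix V) * max 1 ((p : ℝ) ^ T * ‖ℓ ∘ (intBasisMatrix V).row‖) ≤
      maxMinor b := by
  obtain ⟨hbV, hbℓ, hbli⟩ := hb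
  have hp : (0 : ℝ) < p := mod_cast (Fact.out : p.Prime).pos
  obtain ⟨A, rfl⟩ := exists_eq_mul_intBasisMatrix hbV
  have hdet : A.det ≠ 0 := by
    intro h
    have := maxMinor_pos_iff.2 hbli
    rw [maxMinor_mul, h, Int.natAbs_zero, zero_mul] at this
    exact this.false
  have hvalues : ‖(A.map (Int.castRingHom ℚ_[p])).mulVec (ℓ ∘ (intBasisMatrix V).row)‖ ≤
      (p : ℝ) ^ (-(T : ℤ)) :=
    (pi_norm_le_iff_of_nonneg (zpow_nonneg hp.le _)).2 fun i =>
      (congrArg norm (map_mul_row ℓ A _ i)).symm.trans_le (hbℓ i)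
  rw [maxMinor_mul, Nat.cast_mul, mul_comm]
  gcongr
  refine max_le (mod_cast Int.natAbs_pos.2 hdet) ?_
  calc (p : ℝ) ^ T * ‖ℓ ∘ (intBasisMatrix V).row‖
      ≤ p ^ T * (A.det.natAbs * ‖(A.det : ℚ_[p])‖ * ‖ℓ ∘ (intBasisMatrix V).row‖) := by
        gcongr
        exact le_mul_of_one_le_left (norm_nonneg _) (one_le_natAbs_mul_norm_intCast hdet)
    _ ≤ p ^ T * (A.det.natAbs * (p : ℝ) ^ (-(T : ℤ))) := by
        rw [mul_assoc (A.det.natAbs : ℝ)]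
        gcongr
        exact (norm_det_mul_norm_le A _).trans hvalues
    _ = A.det.natAbs := by
        rw [zpow_neg, zpow_natCast]
        field_simp

theorem intBasisMatrix_mem (i) : intBasisMatrix V i ∈ intPoints V :=
  (intBasis V i).2

variable (T ℓ V) in
theorem exists_mem_approxBases_maxMinor_eq :
    ∃ b ∈ approxBases T ℓ V, maxMinor b = covol T ℓ V := by
  obtain ⟨b, hb, -⟩ := exists_mem_approxBases_maxMinor_le (T := T) (ℓ := ℓ)
    (intBasisMatrix_mem (V := V)) linearIndependent_intBasisMatrix
  exact Nat.sInf_mem (s := maxMinor '' approxBases T ℓ V) ⟨_, b, hb, rfl⟩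

theorem covol_eq : (covol T ℓ V : ℝ) =
    maxMinor (intBasisMatrix V) * max 1 ((p : ℝ) ^ T * ‖ℓ ∘ (intBasisMatrix V).row‖) := by
  obtain ⟨b, ⟨hbV, hbℓ, hbli⟩, hle⟩ := exists_mem_approxBases_maxMinor_le (T := T) (ℓ := ℓ)
    (intBasisMatrix_mem (V := V)) linearIndependent_intBasisMatrix
  obtain ⟨b₀, hb₀, hcovol⟩ := exists_mem_approxBases_maxMinor_eq T ℓ V
  refine le_antisymm ((Nat.cast_le.2 (covol_le_maxMinor rfl hbV hbℓ hbli)).trans hle) ?_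
  exact hcovol ▸ maxMinor_mul_max_le hb₀

theorem covol_sup_span_singleton_le {w : ι → ℤ} (hwV : toRat w ∉ V)
    (hw : ‖ℓ w‖ ≤ (p : ℝ) ^ (-(T : ℤ))) :
    (covol T ℓ (V ⊔ Submodule.span ℚ {toRat w}) : ℝ) ≤ Fintype.card ι * ‖w‖ * covol T ℓ V := by
  obtain ⟨b, ⟨hbV, hbℓ, hbli⟩, hb⟩ := exists_mem_approxBases_maxMinor_eq T ℓ V
  have hfinrank := Submodule.finrank_sup_span_singleton hwV
  have hcard : Module.finrank ℚ V + 1 ≤ Fintype.card ι := by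
    rw [← hfinrank]
    simpa using Submodule.finrank_le (V ⊔ Submodule.span ℚ {toRat w})
  have hspan : Submodule.span ℚ (Set.range fun i => toRat (b i)) ≤ V :=
    Submodule.span_le.2 (Set.range_subset_iff.2 hbV)
  have hli : LinearIndependent ℤ (Fin.cons w b : Fin (Module.finrank ℚ V + 1) → ι → ℤ) := by
    have hcons : (fun i => toRat ((Fin.cons w b : Fin (_ + 1) → ι → ℤ) i)) =
        Fin.cons (toRat w) fun i => toRat (b i) :=
      funext (Fin.cases rfl fun _ => rfl)
    rw [← linearIndependent_toRat_iff, hcons, linearIndependent_finCons]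
    exact ⟨linearIndependent_toRat_iff.2 hbli, fun h => hwV (hspan h)⟩
  have hle := covol_le_maxMinor (T := T) (ℓ := ℓ) hfinrank.symm
    (Fin.cases (Submodule.mem_sup_right (Submodule.mem_span_singleton_self _))
      fun i => Submodule.mem_sup_left (hbV i))
    (Fin.cases hw hbℓ) hli
  calc (covol T ℓ (V ⊔ Submodule.span ℚ {toRat w}) : ℝ)
      ≤ (Module.finrank ℚ V + 1) * ‖w‖ * maxMinor b :=
        (Nat.cast_le.2 hle).trans (maxMinor_cons_le w b)
    _ ≤ Fintype.card ι * ‖w‖ * covol T ℓ V := by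
        rw [hb]
        gcongr
        exact_mod_cast hcard

theorem pow_finrank_le_covol {η : ℝ} (hη : 0 ≤ η)
    (h : ∀ q ≠ 0, ‖ℓ q‖ ≤ (p : ℝ) ^ (-(T : ℤ)) → η ≤ ‖q‖) :
    (η / Fintype.card ι) ^ Module.finrank ℚ V ≤ covol T ℓ V := by
  obtain ⟨b, ⟨-, hbℓ, hbli⟩, hb⟩ := exists_mem_approxBases_maxMinor_eq T ℓ V
  have hminor := maxMinor_pos_iff.2 hbli
  rw [← hb]
  rcases Nat.eq_zero_or_pos (Module.finrank ℚ V) with h0 | hpos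
  · have : (η / Fintype.card ι) ^ Module.finrank ℚ V = 1 := by rw [h0, pow_zero]
    rw [this]
    exact_mod_cast hminor
  have : Nonempty (Fin (Module.finrank ℚ V)) := ⟨⟨0, hpos⟩⟩
  obtain ⟨z, hz, hnorm⟩ := exists_vecMul_ne_zero_norm_pow_le hminor
  have hℓz : ‖ℓ (Matrix.vecMul z b)‖ ≤ (p : ℝ) ^ (-(T : ℤ)) := by
    have hmap := map_mul_row ℓ (Matrix.of fun _ : Unit => z) b ()
    rw [Matrix.mul_apply_eq_vecMul] at hmap
    exact hmap ▸ (norm_sum_intCast_mul_le z fun i => ℓ (b i)).trans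
      ((pi_norm_le_iff_of_nonneg (by positivity)).2 hbℓ)
  have hcard : Module.finrank ℚ V ≤ Fintype.card ι := by simpa using Submodule.finrank_le V
  have hcard' : (0 : ℝ) < Fintype.card ι := mod_cast hpos.trans_le hcard
  rw [Fintype.card_fin] at hnorm
  rw [div_pow, div_le_iff₀ (by positivity), mul_comm]
  calc η ^ Module.finrank ℚ V ≤ ‖Matrix.vecMul z b‖ ^ Module.finrank ℚ V := by
        gcongr
        exact h _ hz hℓz
    _ ≤ (Module.finrank ℚ V : ℝ) ^ Module.finrank ℚ V * maxMinor b := hnorm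
    _ ≤ (Fintype.card ι : ℝ) ^ Module.finrank ℚ V * maxMinor b := by gcongr

/-- As a function of `ℓ`, the covolume is governed by the value of `ℓ` at a single integer vector,
the element of `intBasis V` where `‖ℓ‖` is largest. -/
theorem exists_norm_lt_of_covol_lt {ρ ε : ℝ} (hρ : ρ ≤ covol T ℓ V) (hε : 0 < ε) (hε1 : ε ≤ 1) :
    ∃ q : ι → ℤ, ∀ ℓ' : (ι → ℤ) →ₗ[ℤ] ℚ_[p], covol T ℓ' V < ε * ρ → ‖ℓ' q‖ < ε * ‖ℓ q‖ := by
  let c : ℝ := maxMinor (intBasisMatrix V)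
  have hp : (0 : ℝ) < p := mod_cast (Fact.out : p.Prime).pos
  have hc : 0 < c := Nat.cast_pos.2 (maxMinor_pos_iff.2 linearIndependent_intBasisMatrix)
  by_cases hsmall : (p : ℝ) ^ T * ‖ℓ ∘ (intBasisMatrix V).row‖ ≤ 1
  · refine ⟨0, fun ℓ' h => absurd h (not_lt.2 ?_)⟩
    rw [covol_eq, max_eq_left hsmall, mul_one] at hρ
    rw [covol_eq]
    calc ε * ρ ≤ ε * c := by gcongr
      _ ≤ c * 1 := by rw [mul_comm]; gcongr
      _ ≤ c * _ := by gcongr; exact le_max_left ..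
  · push Not at hsmall
    have hne : Nonempty (Fin (Module.finrank ℚ V)) := by
      by_contra h
      rw [not_nonempty_iff] at h
      rw [Subsingleton.elim (ℓ ∘ (intBasisMatrix V).row) 0, norm_zero, mul_zero] at hsmall
      exact hsmall.not_ge zero_le_one
    obtain ⟨i, hi⟩ := Finite.exists_max fun i => ‖ℓ (intBasisMatrix V i)‖
    refine ⟨intBasisMatrix V i, fun ℓ' h => ?_⟩
    rw [covol_eq, max_eq_right hsmall.le] at hρ
    have hlt : c * ((p : ℝ) ^ T * ‖ℓ' (intBasisMatrix V i)‖) <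
        c * ((p : ℝ) ^ T * (ε * ‖ℓ (intBasisMatrix V i)‖)) := by
      calc c * ((p : ℝ) ^ T * ‖ℓ' (intBasisMatrix V i)‖) ≤ covol T ℓ' V := by
            rw [covol_eq]
            gcongr
            refine le_max_of_le_right ?_
            gcongr
            exact norm_le_pi_norm (ℓ' ∘ (intBasisMatrix V).row) i
        _ < ε * ρ := h
        _ ≤ ε * (c * ((p : ℝ) ^ T * ‖ℓ ∘ (intBasisMatrix V).row‖)) := by gcongr
        _ ≤ ε * (c * ((p : ℝ) ^ T * ‖ℓ (intBasisMatrix V i)‖)) := by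
            gcongr
            exact (pi_norm_le_iff_of_nonneg (norm_nonneg _)).2 hi
        _ = _ := by ring
    exact lt_of_mul_lt_mul_left (lt_of_mul_lt_mul_left hlt hc.le) (by positivity)

end Covolume

/-! ### Power series on the unit ball of an ultrametric field -/

section EvalSeries

open Filter Topology

variable {K : Type*} [NormedField K]

/-- The value at `x` of the power series with coefficients `c`. It is meant for `‖x‖ ≤ 1` and
coefficients tending to `0`, where the series converges over a complete ultrametric field. -/
noncomputable def evalSeries (c : ℕ → K) (x : K) : K :=
  ∑' k, c k * x ^ k

/-- The coefficients of the difference quotient `(evalSeries c x - evalSeries c x₀) / (x - x₀)`. -/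
noncomputable def diffQuot (c : ℕ → K) (x₀ : K) (j : ℕ) : K :=
  evalSeries (fun k => c (k + (j + 1))) x₀

/-- The power series with coefficients `c` converges on the closed unit ball and its Weierstrass
degree there is `r`: the index `r` is the last one where `‖c k‖` is maximal. -/
structure HasWeierstrassDegree (c : ℕ → K) (r : ℕ) : Prop where
  tendsto : Tendsto c atTop (𝓝 0)
  norm_le : ∀ k, ‖c k‖ ≤ ‖c r‖
  norm_lt : ∀ k, r < k → ‖c k‖ < ‖c r‖

variable {c : ℕ → K} {r : ℕ} {x x₀ : K}

theorem norm_mul_pow_le (a : K) (hx : ‖x‖ ≤ 1) (k : ℕ) : ‖a * x ^ k‖ ≤ ‖a‖ := by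
  rw [norm_mul, norm_pow]
  exact mul_le_of_le_one_right (norm_nonneg _) (pow_le_one₀ (norm_nonneg _) hx)

theorem exists_hasWeierstrassDegree (hc : Tendsto c atTop (𝓝 0)) {D j : ℕ} (hj : j ≤ D)
    (h : ∀ k, D < k → ‖c k‖ < ‖c j‖) : ∃ r ≤ D, HasWeierstrassDegree c r := by
  obtain ⟨r, hr, hmax⟩ := Finset.exists_max_image (Finset.range (D + 1))
    (fun k => toLex (‖c k‖, k)) ⟨0, by simp⟩
  simp only [Finset.mem_range, Nat.lt_succ_iff, Prod.Lex.toLex_le_toLex] at hr hmax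
  have hle (k) : ‖c k‖ ≤ ‖c r‖ := by
    have hrange {i} (hi : i ≤ D) : ‖c i‖ ≤ ‖c r‖ := (hmax i hi).elim le_of_lt fun h => h.1.le
    obtain hk | hk := le_or_gt k D
    · exact hrange hk
    · exact (h k hk).le.trans (hrange hj)
  refine ⟨r, hr, hc, hle, fun k hk => ?_⟩
  obtain hkD | hkD := le_or_gt k D
  · exact (hmax k hkD).resolve_right fun h => hk.not_ge h.2
  · exact (h k hkD).trans_le (hle j)

variable [IsUltrametricDist K]

theorem norm_evalSeries_le {M : ℝ} (hc : ∀ k, ‖c k‖ ≤ M) (hx : ‖x‖ ≤ 1) : ‖evalSeries c x‖ ≤ M :=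
  IsUltrametricDist.norm_tsum_le_of_forall_le fun k => (norm_mul_pow_le _ hx k).trans (hc k)

theorem norm_evalSeries_lt {M : ℝ} (hc : Tendsto c atTop (𝓝 0)) (hM : ∀ k, ‖c k‖ < M)
    (hx : ‖x‖ ≤ 1) : ‖evalSeries c x‖ < M := by
  obtain ⟨k, hk⟩ : ∃ k, ∀ i, ‖c i‖ ≤ ‖c k‖ := by
    by_cases h : ∃ k, c k ≠ 0
    · obtain ⟨k, hk⟩ := h
      refine (continuous_of_discreteTopology (f := fun i => ‖c i‖)).exists_forall_ge' k ?_
      rw [cocompact_eq_cofinite, Nat.cofinite_eq_atTop]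
      exact (hc.norm.eventually_lt_const (by simpa using hk)).mono fun _ => le_of_lt
    · push Not at h
      exact ⟨0, fun i => by rw [h i, h 0]⟩
  exact (norm_evalSeries_le hk hx).trans_lt (hM k)

variable [CompleteSpace K]

theorem summable_mul_pow (hc : Tendsto c atTop (𝓝 0)) (hx : ‖x‖ ≤ 1) :
    Summable fun k => c k * x ^ k := by
  refine NonarchimedeanAddGroup.summable_of_tendsto_cofinite_zero ?_
  rw [Nat.cofinite_eq_atTop]
  exact squeeze_zero_norm (fun k => norm_mul_pow_le _ hx k)
    (tendsto_zero_iff_norm_tendsto_zero.1 hc)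

theorem evalSeries_eq_zero_add (hc : Tendsto c atTop (𝓝 0)) (hx : ‖x‖ ≤ 1) :
    evalSeries c x = c 0 + x * evalSeries (fun k => c (k + 1)) x := by
  rw [evalSeries, (summable_mul_pow hc hx).tsum_eq_zero_add, evalSeries, ← tsum_mul_left, pow_zero,
    mul_one]
  congr 1
  exact tsum_congr fun k => by ring

theorem diffQuot_eq (hc : Tendsto c atTop (𝓝 0)) (hx₀ : ‖x₀‖ ≤ 1) (j : ℕ) :
    diffQuot c x₀ j = c (j + 1) + x₀ * diffQuot c x₀ (j + 1) := by
  rw [diffQuot, evalSeries_eq_zero_add ((tendsto_add_atTop_iff_nat (j + 1)).2 hc) hx₀, diffQuot,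
    zero_add]
  simp only [Nat.add_assoc, Nat.add_left_comm 1 j]

omit [CompleteSpace K] in
theorem tendsto_diffQuot (hc : Tendsto c atTop (𝓝 0)) (hx₀ : ‖x₀‖ ≤ 1) :
    Tendsto (diffQuot c x₀) atTop (𝓝 0) := by
  rw [NormedAddGroup.tendsto_nhds_zero] at hc ⊢
  intro ε hε
  obtain ⟨N, hN⟩ := eventually_atTop.1 (hc (ε / 2) (half_pos hε))
  filter_upwards [eventually_ge_atTop N] with j hj
  exact (norm_evalSeries_le (fun k => (hN (k + (j + 1)) (by omega)).le) hx₀).trans_lt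
    (half_lt_self hε)

theorem evalSeries_sub_evalSeries (hc : Tendsto c atTop (𝓝 0)) (hx : ‖x‖ ≤ 1) (hx₀ : ‖x₀‖ ≤ 1) :
    evalSeries c x - evalSeries c x₀ = (x - x₀) * evalSeries (diffQuot c x₀) x := by
  have hq := tendsto_diffQuot hc hx₀
  have hshift : evalSeries (diffQuot c x₀) x = evalSeries (fun k => c (k + 1)) x +
      x₀ * evalSeries (fun k => diffQuot c x₀ (k + 1)) x := by
    rw [evalSeries, evalSeries, evalSeries, ← tsum_mul_left, ← Summable.tsum_add
      (summable_mul_pow ((tendsto_add_atTop_iff_nat 1).2 hc) hx)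
      ((summable_mul_pow ((tendsto_add_atTop_iff_nat 1).2 hq) hx).mul_left _)]
    exact tsum_congr fun k => by rw [diffQuot_eq hc hx₀]; ring
  have hzero : diffQuot c x₀ 0 = evalSeries (fun k => c (k + 1)) x₀ := rfl
  have hsplit := evalSeries_eq_zero_add hq hx
  rw [evalSeries_eq_zero_add hc hx, evalSeries_eq_zero_add hc hx₀, ← hzero]
  linear_combination x₀ * hsplit - x * hshift

omit [CompleteSpace K] in
theorem norm_add_mul_evalSeries (hc : HasWeierstrassDegree c r) (hx : ‖x‖ ≤ 1) :
    ‖c r + x * evalSeries (fun k => c (k + (r + 1))) x‖ = ‖c r‖ := by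
  have hlt : ‖x * evalSeries (fun k => c (k + (r + 1))) x‖ < ‖c r‖ := by
    rw [norm_mul]
    exact (mul_le_of_le_one_left (norm_nonneg _) hx).trans_lt <| norm_evalSeries_lt
      ((tendsto_add_atTop_iff_nat _).2 hc.tendsto) (fun k => hc.norm_lt _ (by omega)) hx
  rw [IsUltrametricDist.norm_add_eq_max_of_norm_ne_norm hlt.ne', max_eq_left hlt.le]

theorem HasWeierstrassDegree.norm_evalSeries (hc : HasWeierstrassDegree c 0) (hx : ‖x‖ ≤ 1) :
    ‖evalSeries c x‖ = ‖c 0‖ := by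
  rw [evalSeries_eq_zero_add hc.tendsto hx, norm_add_mul_evalSeries hc hx]

theorem HasWeierstrassDegree.diffQuot (hc : HasWeierstrassDegree c (r + 1)) (hx₀ : ‖x₀‖ ≤ 1) :
    HasWeierstrassDegree (diffQuot c x₀) r := by
  have hr : ‖PadicDioph.diffQuot c x₀ r‖ = ‖c (r + 1)‖ := by
    rw [diffQuot_eq hc.tendsto hx₀]
    exact norm_add_mul_evalSeries hc hx₀
  exact
    { tendsto := tendsto_diffQuot hc.tendsto hx₀
      norm_le := fun _ => hr ▸ norm_evalSeries_le (fun _ => hc.norm_le _) hx₀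
      norm_lt := fun _ hk => hr ▸ norm_evalSeries_lt
        ((tendsto_add_atTop_iff_nat _).2 hc.tendsto) (fun _ => hc.norm_lt _ (by omega)) hx₀ }

theorem norm_evalSeries_diffQuot_le (hc : Tendsto c atTop (𝓝 0)) (hx : ‖x‖ ≤ 1) (hx₀ : ‖x₀‖ ≤ 1)
    {δ τ : ℝ} (hδ : 0 < δ) (hdist : δ ≤ ‖x - x₀‖) (hτ : ‖evalSeries c x‖ ≤ τ)
    (hτ₀ : ‖evalSeries c x₀‖ ≤ τ) : ‖evalSeries (diffQuot c x₀) x‖ ≤ τ / δ := by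
  rw [le_div_iff₀ hδ, mul_comm]
  calc δ * ‖evalSeries (diffQuot c x₀) x‖ ≤ ‖x - x₀‖ * ‖evalSeries (diffQuot c x₀) x‖ := by gcongr
    _ = ‖evalSeries c x + -evalSeries c x₀‖ := by
        rw [← norm_mul, ← evalSeries_sub_evalSeries hc hx hx₀, sub_eq_add_neg]
    _ ≤ τ := (IsUltrametricDist.norm_add_le_max _ _).trans
        (max_le hτ (norm_neg (evalSeries c x₀) ▸ hτ₀))

theorem norm_evalSeries_le_max (hc : Tendsto c atTop (𝓝 0)) (hx : ‖x‖ ≤ 1) (hx₀ : ‖x₀‖ ≤ 1) :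
    ‖evalSeries c x‖ ≤ max (‖x - x₀‖ * ‖evalSeries (diffQuot c x₀) x‖) ‖evalSeries c x₀‖ := by
  rw [← norm_mul, ← evalSeries_sub_evalSeries hc hx hx₀]
  simpa using IsUltrametricDist.norm_add_le_max (evalSeries c x - evalSeries c x₀) (evalSeries c x₀)

/-- A Remez-type inequality, by induction on the Weierstrass degree: for `x₀ ∈ S` the difference
quotient at `x₀` has smaller degree and is at most `τ / δ` on `S` outside `closedBall x₀ δ`. -/
theorem HasWeierstrassDegree.exists_cover_or_norm_evalSeries_le (hc : HasWeierstrassDegree c r)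
    {x₁ : K} {R δ τ : ℝ} (hδ : 0 < δ) (hδR : δ ≤ R) {S : Set K}
    (hS : S ⊆ closedBall x₁ R ∩ closedBall 0 1) (hτ : ∀ x ∈ S, ‖evalSeries c x‖ ≤ τ) :
    (∃ Z : Finset K, Z.card ≤ r ∧ S ⊆ ⋃ z ∈ Z, closedBall z δ) ∨
      ∀ x ∈ closedBall x₁ R ∩ closedBall 0 1, ‖evalSeries c x‖ ≤ τ * (R / δ) ^ r := by
  classical
  have hnorm {x} (hx : x ∈ closedBall x₁ R ∩ closedBall 0 1) : ‖x‖ ≤ 1 := by simpa using hx.2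
  induction r generalizing c τ S with
  | zero =>
    obtain rfl | ⟨x₀, hx₀⟩ := S.eq_empty_or_nonempty
    · exact Or.inl ⟨∅, by simp⟩
    refine Or.inr fun x hx => ?_
    rw [hc.norm_evalSeries (hnorm hx), ← hc.norm_evalSeries (hnorm (hS hx₀)), pow_zero, mul_one]
    exact hτ x₀ hx₀
  | succ r ih =>
    obtain rfl | ⟨x₀, hx₀⟩ := S.eq_empty_or_nonempty
    · exact Or.inl ⟨∅, by simp⟩
    have hx₀1 := hnorm (hS hx₀)
    have hquot (x) (hx : x ∈ S \ closedBall x₀ δ) :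
        ‖evalSeries (PadicDioph.diffQuot c x₀) x‖ ≤ τ / δ := by
      have hdist : δ < dist x x₀ := not_le.1 hx.2
      exact norm_evalSeries_diffQuot_le hc.tendsto (hnorm (hS hx.1)) hx₀1 hδ
        (dist_eq_norm x x₀ ▸ hdist.le) (hτ x hx.1) (hτ x₀ hx₀)
    obtain ⟨Z, hZ, hcover⟩ | hbound := ih (hc.diffQuot hx₀1) (Set.sdiff_subset.trans hS) hquot
    · refine Or.inl ⟨insert x₀ Z, (Finset.card_insert_le _ _).trans (by omega), ?_⟩
      rwa [Finset.set_biUnion_insert, ← Set.sdiff_subset_iff]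
    · refine Or.inr fun x hx => (norm_evalSeries_le_max hc.tendsto (hnorm hx) hx₀1).trans ?_
      have hτ0 : 0 ≤ τ := (norm_nonneg _).trans (hτ x₀ hx₀)
      have hR : 0 ≤ R := hδ.le.trans hδR
      have hdist : ‖x - x₀‖ ≤ R := by
        rw [← dist_eq_norm]
        exact (dist_triangle_max x x₁ x₀).trans (max_le hx.1 (mem_closedBall'.1 (hS hx₀).1))
      refine max_le ?_ ((hτ x₀ hx₀).trans ?_)
      · calc ‖x - x₀‖ * ‖evalSeries (PadicDioph.diffQuot c x₀) x‖
            ≤ R * (τ / δ * (R / δ) ^ r) := by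
              gcongr
              exact hbound x hx
          _ = τ * (R / δ) ^ (r + 1) := by ring
      · exact le_mul_of_one_le_right hτ0 (one_le_pow₀ ((one_le_div hδ).2 hδR))

end EvalSeries

section UniformDegree

open Filter Topology

variable {K : Type*} [NontriviallyNormedField K] [IsUltrametricDist K] [CompleteSpace K]
  {E : Type*} [NormedAddCommGroup E] [NormedSpace K E] [FiniteDimensional K E]

theorem exists_eq_sum_smul_of_tendsto_zero {v : ℕ → E} (hv : Tendsto v atTop (𝓝 0)) :
    ∃ (d : ℕ) (g : Fin d → ℕ) (a : ℕ → Fin d → K), (∀ k, v k = ∑ i, a k i • v (g i)) ∧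
      ∀ i, Tendsto (fun k => a k i) atTop (𝓝 0) := by
  obtain ⟨f, hf, hspan, hli⟩ := Submodule.exists_fun_fin_finrank_span_eq K (Set.range v)
  choose g hg using hf
  have hmem (k) : v k ∈ Submodule.span K (Set.range f) := by
    rw [hspan]
    exact Submodule.subset_span (Set.mem_range_self k)
  let B := Module.Basis.span hli
  refine ⟨_, g, fun k i => B.repr ⟨v k, hmem k⟩ i, fun k => ?_, fun i => ?_⟩
  · have h := congrArg (Submodule.subtype _) (B.sum_repr ⟨v k, hmem k⟩)
    simpa only [map_sum, map_smul, Submodule.subtype_apply, B, Module.Basis.span_apply, hg]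
      using h.symm
  · have hv' : Tendsto (fun k => (⟨v k, hmem k⟩ : Submodule.span K (Set.range f))) atTop (𝓝 0) :=
      tendsto_subtype_rng.2 hv
    have hcoord := (B.coord i).continuous_of_finiteDimensional.tendsto 0
    rw [map_zero] at hcoord
    exact hcoord.comp hv'

theorem exists_forall_hasWeierstrassDegree {v : ℕ → E} (hv : Tendsto v atTop (𝓝 0)) :
    ∃ D, ∀ φ : E →ₗ[K] K, (∀ k, φ (v k) = 0) ∨
      ∃ r ≤ D, HasWeierstrassDegree (fun k => φ (v k)) r := by
  obtain ⟨d, g, a, hsum, ha⟩ := exists_eq_sum_smul_of_tendsto_zero (K := K) hv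
  have hsmall : ∀ᶠ k in atTop, ∀ i, ‖a k i‖ < 1 :=
    eventually_all.2 fun i => (ha i).norm.eventually_lt_const (by simp)
  obtain ⟨N, hN⟩ := eventually_atTop.1 hsmall
  refine ⟨max N (Finset.univ.sup g), fun φ => or_iff_not_imp_left.2 fun hφ => ?_⟩
  have hφsum (k) : φ (v k) = ∑ i, a k i * φ (v (g i)) := by
    rw [congrArg φ (hsum k), map_sum]
    simp only [map_smul, smul_eq_mul]
  obtain ⟨i₁, hi₁⟩ : ∃ i, φ (v (g i)) ≠ 0 := by
    by_contra! h
    exact hφ fun k => by rw [hφsum, Finset.sum_eq_zero fun i _ => by rw [h i, mul_zero]]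
  have : Nonempty (Fin d) := ⟨i₁⟩
  obtain ⟨i₀, hi₀⟩ := Finite.exists_max fun i => ‖φ (v (g i))‖
  have hpos : 0 < ‖φ (v (g i₀))‖ := (norm_pos_iff.2 hi₁).trans_le (hi₀ i₁)
  refine exists_hasWeierstrassDegree ?_ (j := g i₀)
    (le_max_of_le_right (Finset.le_sup (Finset.mem_univ i₀))) fun k hk => ?_
  · have hφ0 := φ.continuous_of_finiteDimensional.tendsto 0
    rw [map_zero] at hφ0
    exact hφ0.comp hv
  · obtain ⟨i, -, hi⟩ := IsUltrametricDist.exists_norm_finsetSum_le_of_nonempty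
      Finset.univ_nonempty fun i => a k i * φ (v (g i))
    calc ‖φ (v k)‖ ≤ ‖a k i‖ * ‖φ (v (g i))‖ := by rw [hφsum k, ← norm_mul]; exact hi
      _ ≤ ‖a k i‖ * ‖φ (v (g i₀))‖ := by gcongr; exact hi₀ i
      _ < ‖φ (v (g i₀))‖ := mul_lt_of_lt_one_left hpos (hN k (by omega) i)

end UniformDegree

/-! ### Small values of power series on `p`-adic balls -/

section PadicBall

variable {p}

/-- The closed ball of radius `p ^ (-l)` around `a`. -/
def padicBall (a : ℚ_[p]) (l : ℕ) : Set ℚ_[p] :=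
  closedBall a ((p : ℝ) ^ (-(l : ℤ)))

variable {a b x : ℚ_[p]} {l : ℕ}

theorem mem_padicBall_iff_exists : x ∈ padicBall a l ↔ ∃ z : ℤ_[p], x = a + z * p ^ l := by
  have hp : (p : ℚ_[p]) ≠ 0 := mod_cast (Fact.out : p.Prime).ne_zero
  have hpow : ‖(p : ℚ_[p]) ^ l‖ = (p : ℝ) ^ (-(l : ℤ)) := by
    rw [norm_pow, Padic.norm_p, inv_pow, zpow_neg, zpow_natCast]
  rw [padicBall, mem_closedBall, dist_eq_norm, ← hpow]
  constructor
  · intro hx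
    have hz : ‖(x - a) / p ^ l‖ ≤ 1 := by
      rw [norm_div]
      exact div_le_one_of_le₀ hx (norm_nonneg _)
    exact ⟨⟨_, hz⟩, by field_simp; ring⟩
  · rintro ⟨z, rfl⟩
    rw [add_sub_cancel_left, norm_mul]
    exact mul_le_of_le_one_left (norm_nonneg _) z.2

theorem padicBall_add_mul_pow_subset (a : ℚ_[p]) (l i : ℕ) :
    padicBall (a + (i : ℚ_[p]) * (p : ℚ_[p]) ^ l) (l + 1) ⊆ padicBall a l := by
  intro x hx
  obtain ⟨z, rfl⟩ := mem_padicBall_iff_exists.1 hx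
  exact mem_padicBall_iff_exists.2 ⟨i + z * p, by push_cast; ring⟩

theorem padicBall_eq_iUnion (a : ℚ_[p]) (l : ℕ) :
    padicBall a l =
      ⋃ i ∈ Finset.range p, padicBall (a + (i : ℚ_[p]) * (p : ℚ_[p]) ^ l) (l + 1) := by
  refine subset_antisymm (fun x hx => ?_)
    (Set.iUnion₂_subset fun i _ => padicBall_add_mul_pow_subset a l i)
  obtain ⟨z, rfl⟩ := mem_padicBall_iff_exists.1 hx
  obtain ⟨i, hi, hz⟩ := PadicInt.exists_mem_range z
  obtain ⟨u, hu⟩ := Ideal.mem_span_singleton.1 (PadicInt.maximalIdeal_eq_span_p (p := p) ▸ hz)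
  refine Set.mem_iUnion₂.2 ⟨i, Finset.mem_range.2 hi, mem_padicBall_iff_exists.2 ⟨u, ?_⟩⟩
  rw [eq_add_of_sub_eq hu]
  push_cast
  ring

theorem pairwiseDisjoint_padicBall (a : ℚ_[p]) (l : ℕ) :
    (Finset.range p : Set ℕ).PairwiseDisjoint
      fun i : ℕ => padicBall (a + (i : ℚ_[p]) * (p : ℚ_[p]) ^ l) (l + 1) := by
  intro i hi j hj hij
  refine Set.disjoint_left.2 fun x hxi hxj => hij ?_
  obtain ⟨z, rfl⟩ := mem_padicBall_iff_exists.1 hxi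
  obtain ⟨u, hu⟩ := mem_padicBall_iff_exists.1 hxj
  have hp : (p : ℚ_[p]) ≠ 0 := mod_cast (Fact.out : p.Prime).ne_zero
  have hsub : ((i - j : ℤ) : ℤ_[p]) = p * (u - z) := by
    refine Subtype.coe_injective (mul_right_cancel₀ (pow_ne_zero l hp) ?_)
    push_cast
    linear_combination hu
  have hdvd : (p : ℤ) ∣ i - j := by
    rw [← PadicInt.norm_int_lt_one_iff_dvd, hsub, PadicInt.norm_lt_one_iff_dvd]
    exact dvd_mul_right _ _
  have hlt : |(i - j : ℤ)| < p := by
    have := Finset.mem_range.1 hi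
    have := Finset.mem_range.1 hj
    rw [abs_lt]
    omega
  exact_mod_cast sub_eq_zero.1 (Int.eq_zero_of_abs_lt_dvd hdvd hlt)

theorem padicBall_subset_closedBall (ha : ‖a‖ ≤ 1) (l : ℕ) :
    padicBall a l ⊆ closedBall 0 1 := by
  intro x hx
  obtain ⟨z, rfl⟩ := mem_padicBall_iff_exists.1 hx
  rw [mem_closedBall_zero_iff]
  refine (IsUltrametricDist.norm_add_le_max _ _).trans (max_le ha ?_)
  exact_mod_cast (z * (p : ℤ_[p]) ^ l).norm_le_one

variable (ν : Measure ℚ_[p]) [ν.IsAddLeftInvariant]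

theorem measure_padicBall_eq (a b : ℚ_[p]) (l : ℕ) : ν (padicBall a l) = ν (padicBall b l) := by
  rw [← measure_preimage_add ν (b - a) (padicBall b l), padicBall, padicBall,
    preimage_add_closedBall, sub_sub_cancel]

theorem measure_padicBall_eq_mul (a b : ℚ_[p]) (l : ℕ) :
    ν (padicBall a l) = p * ν (padicBall b (l + 1)) := by
  rw [padicBall_eq_iUnion, measure_biUnion_finset (pairwiseDisjoint_padicBall a l)
    fun i _ => isClosed_closedBall.measurableSet,
    Finset.sum_congr rfl fun i _ => measure_padicBall_eq ν _ b (l + 1), Finset.sum_const,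
    Finset.card_range, nsmul_eq_mul]

theorem measure_padicBall_inter_le {Q : ℚ_[p] → Prop} {C : ℝ≥0∞}
    (h : ∀ i : ℕ, ν {x ∈ padicBall (a + (i : ℚ_[p]) * (p : ℚ_[p]) ^ l) (l + 1) | Q x} ≤
      C * ν (padicBall (a + (i : ℚ_[p]) * (p : ℚ_[p]) ^ l) (l + 1))) :
    ν {x ∈ padicBall a l | Q x} ≤ C * ν (padicBall a l) := by
  have hcover : {x ∈ padicBall a l | Q x} ⊆ ⋃ i ∈ Finset.range p,
      {x ∈ padicBall (a + (i : ℚ_[p]) * (p : ℚ_[p]) ^ l) (l + 1) | Q x} := by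
    rintro x ⟨hx, hQ⟩
    rw [padicBall_eq_iUnion] at hx
    obtain ⟨i, hi, hxi⟩ := Set.mem_iUnion₂.1 hx
    exact Set.mem_iUnion₂.2 ⟨i, hi, hxi, hQ⟩
  calc ν {x ∈ padicBall a l | Q x}
      ≤ ∑ i ∈ Finset.range p,
          ν {x ∈ padicBall (a + (i : ℚ_[p]) * (p : ℚ_[p]) ^ l) (l + 1) | Q x} :=
        (measure_mono hcover).trans (measure_biUnion_finset_le _ _)
    _ ≤ ∑ _i ∈ Finset.range p, C * ν (padicBall a (l + 1)) :=
        Finset.sum_le_sum fun i _ => measure_padicBall_eq ν _ a (l + 1) ▸ h i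
    _ = C * ν (padicBall a l) := by
        rw [Finset.sum_const, Finset.card_range, nsmul_eq_mul, measure_padicBall_eq_mul ν a a l]
        ring

theorem measure_padicBall_eq_pow_mul (a b : ℚ_[p]) (l s : ℕ) :
    ν (padicBall a l) = p ^ s * ν (padicBall b (l + s)) := by
  induction s with
  | zero => rw [pow_zero, one_mul, Nat.add_zero, measure_padicBall_eq ν a b]
  | succ s ih => rw [ih, measure_padicBall_eq_mul ν b b (l + s), pow_succ, mul_assoc, add_assoc]

theorem measure_norm_evalSeries_lt_le {c : ℕ → ℚ_[p]} {D : ℕ}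
    (hc : (∀ k, c k = 0) ∨ ∃ r ≤ D, HasWeierstrassDegree c r) (ha : ‖a‖ ≤ 1)
    (hx : x ∈ padicBall a l) (s : ℕ) :
    ν {y ∈ padicBall a l | ‖evalSeries c y‖ < ((p : ℝ) ^ (s * D + 1))⁻¹ * ‖evalSeries c x‖} ≤
      D * ((p : ℝ≥0∞) ^ s)⁻¹ * ν (padicBall a l) := by
  obtain hc | ⟨r, hr, hc⟩ := hc
  · simp [evalSeries, hc]
  set S := {y ∈ padicBall a l | ‖evalSeries c y‖ < ((p : ℝ) ^ (s * D + 1))⁻¹ * ‖evalSeries c x‖}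
  have hp : 1 < (p : ℝ) := mod_cast (Fact.out : p.Prime).one_lt
  have hunit : padicBall a l ⊆ closedBall 0 1 := padicBall_subset_closedBall ha l
  have hδ : 0 < (p : ℝ) ^ (-((l + s : ℕ) : ℤ)) := by positivity
  obtain ⟨Z, hZ, hcover⟩ | hbound := hc.exists_cover_or_norm_evalSeries_le (x₁ := a)
    (R := (p : ℝ) ^ (-(l : ℤ))) hδ (zpow_le_zpow_right₀ hp.le (by omega))
    (S := S) (fun y hy => ⟨hy.1, hunit hy.1⟩) fun y hy => hy.2.le
  · calc ν S ≤ ∑ z ∈ Z, ν (padicBall z (l + s)) :=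
          (measure_mono hcover).trans (measure_biUnion_finset_le _ _)
      _ = Z.card * (((p : ℝ≥0∞) ^ s)⁻¹ * ν (padicBall a l)) := by
          rw [Finset.sum_congr rfl fun z _ => measure_padicBall_eq ν z a (l + s),
            Finset.sum_const, nsmul_eq_mul, measure_padicBall_eq_pow_mul ν a a l s, ← mul_assoc _⁻¹,
            ENNReal.inv_mul_cancel (pow_ne_zero _ (mod_cast (Fact.out : p.Prime).ne_zero))
              (by finiteness), one_mul]
      _ ≤ D * ((p : ℝ≥0∞) ^ s)⁻¹ * ν (padicBall a l) := by
          rw [mul_assoc]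
          gcongr
          exact hZ.trans hr
  · have hzero : evalSeries c x = 0 := by
      by_contra h
      have hratio : ((p : ℝ) ^ (-(l : ℤ)) / p ^ (-((l + s : ℕ) : ℤ))) ^ r < p ^ (s * D + 1) := by
        rw [← zpow_sub₀ (by positivity), show -(l : ℤ) - -((l + s : ℕ) : ℤ) = (s : ℕ) by
          push_cast; ring, zpow_natCast, ← pow_mul]
        exact pow_lt_pow_right₀ hp (Nat.lt_succ_of_le (Nat.mul_le_mul_left s hr))
      have hle := hbound x ⟨hx, hunit hx⟩
      rw [mul_right_comm] at hle
      refine hle.not_gt (mul_lt_of_lt_one_left (norm_pos_iff.2 h) ?_)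
      rwa [inv_mul_lt_one₀ (by positivity)]
    have hS : S = ∅ := Set.eq_empty_of_forall_notMem fun y hy =>
      hy.2.not_ge (by rw [hzero, norm_zero, mul_zero]; exact norm_nonneg _)
    rw [hS, measure_empty]
    exact zero_le

end PadicBall

/-! ### Marked points -/

section Marked

variable {P : Type*} [PartialOrder P]

/-- The notion of a marked point from Kleinbock and Margulis' quantitative nondivergence argument,
for fixed values `ψ` of the covolumes at that point: the chain `C` extends to a finite chain whose
new members have values pinched between `ε * ρ` and `ρ`, and which is maximal in the sense that
every further compatible `V` has `ψ V` at least `ρ V`. -/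
def IsMarked (ψ ρ : P → ℝ) (ε : ℝ) (C : Finset P) : Prop :=
  ∃ D : Finset P, C ⊆ D ∧ IsChain (· ≤ ·) (D : Set P) ∧
    (∀ V ∈ D, V ∉ C → ε * ρ V ≤ ψ V ∧ ψ V ≤ ρ V) ∧
    ∀ V ∉ D, IsChain (· ≤ ·) (insert V (D : Set P)) → ρ V ≤ ψ V

theorem IsMarked.of_insert [DecidableEq P] {ψ ρ : P → ℝ} {ε : ℝ} {C : Finset P} {V : P}
    (h : IsMarked ψ ρ ε (insert V C)) (hlow : ε * ρ V ≤ ψ V) (hup : ψ V ≤ ρ V) :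
    IsMarked ψ ρ ε C := by
  obtain ⟨D, hCD, hD, hpinch, hmax⟩ := h
  refine ⟨D, (Finset.subset_insert V C).trans hCD, hD, fun W hW hWC => ?_, hmax⟩
  obtain rfl | hWV := eq_or_ne W V
  · exact ⟨hlow, hup⟩
  · exact hpinch W hW (by simp [hWV, hWC])

variable {p} {ψ : P → ℚ_[p] → ℝ} {ρ : P → ℝ} {ε : ℝ} {δ : ℝ≥0∞}
  {ν : Measure ℚ_[p]} [ν.IsAddLeftInvariant]

theorem measure_not_isMarked_le_of_insert [DecidableEq P] {a b : ℚ_[p]} {l k : ℕ} {C : Finset P}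
    {V : P} (hsub : padicBall b (l + 1) ⊆ padicBall a l)
    (hup : ∀ x ∈ padicBall b (l + 1), ψ V x ≤ ρ V)
    (hsmall : ν {x ∈ padicBall a l | ψ V x < ε * ρ V} ≤ δ * ν (padicBall a l))
    (hinsert : ν {x ∈ padicBall a l | ¬ IsMarked (ψ · x) ρ ε (insert V C)} ≤
      k * p ^ k * δ * ν (padicBall a l)) :
    ν {x ∈ padicBall b (l + 1) | ¬ IsMarked (ψ · x) ρ ε C} ≤
      (k + 1 : ℕ) * p ^ (k + 1) * δ * ν (padicBall b (l + 1)) := by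
  have hcover : {x ∈ padicBall b (l + 1) | ¬ IsMarked (ψ · x) ρ ε C} ⊆
      {x ∈ padicBall a l | ¬ IsMarked (ψ · x) ρ ε (insert V C)} ∪
        {x ∈ padicBall a l | ψ V x < ε * ρ V} := by
    rintro x ⟨hx, hxC⟩
    by_cases hlow : ψ V x < ε * ρ V
    · exact Or.inr ⟨hsub hx, hlow⟩
    · exact Or.inl ⟨hsub hx, fun h => hxC (h.of_insert (not_lt.1 hlow) (hup x hx))⟩
  have hp : (1 : ℝ≥0∞) ≤ p ^ k := one_le_pow₀ (mod_cast (Fact.out : p.Prime).one_le)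
  calc ν {x ∈ padicBall b (l + 1) | ¬ IsMarked (ψ · x) ρ ε C}
      ≤ k * p ^ k * δ * ν (padicBall a l) + δ * ν (padicBall a l) :=
        (measure_mono hcover).trans ((measure_union_le _ _).trans (add_le_add hinsert hsmall))
    _ = (k * p ^ k + 1) * (p * δ * ν (padicBall b (l + 1))) := by
        rw [measure_padicBall_eq_mul ν a b l]
        ring
    _ ≤ (k * p ^ k + p ^ k) * (p * δ * ν (padicBall b (l + 1))) := by gcongr
    _ = (k + 1 : ℕ) * p ^ (k + 1) * δ * ν (padicBall b (l + 1)) := by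
        push_cast
        ring

omit [ν.IsAddLeftInvariant] in
theorem measure_not_isMarked_le_of_forall {a : ℚ_[p]} {l : ℕ} {c : ℝ≥0∞} {C : Finset P}
    (hC : IsChain (· ≤ ·) (C : Set P))
    (h : ∀ x ∈ padicBall a l, ∀ V ∉ C, IsChain (· ≤ ·) (insert V (C : Set P)) → ρ V ≤ ψ V x) :
    ν {x ∈ padicBall a l | ¬ IsMarked (ψ · x) ρ ε C} ≤ c := by
  have hempty : {x ∈ padicBall a l | ¬ IsMarked (ψ · x) ρ ε C} = ∅ :=
    Set.eq_empty_of_forall_notMem fun x hx => hx.2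
      ⟨C, subset_rfl, hC, fun V hV hVC => absurd hV hVC, h x hx.1⟩
  rw [hempty, measure_empty]
  exact zero_le

/-- The induction subdivides the ball until some compatible `V` drops below `ρ V`; on that smaller
ball `V` is added to the chain, which can happen at most `m` times. -/
theorem measure_not_isMarked_le {m N : ℕ}
    (hm : ∀ C : Finset P, IsChain (· ≤ ·) (C : Set P) → C.card ≤ m)
    (hgood : ∀ V a l, ‖a‖ ≤ 1 → (∃ x ∈ padicBall a l, ρ V ≤ ψ V x) →
      ν {x ∈ padicBall a l | ψ V x < ε * ρ V} ≤ δ * ν (padicBall a l))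
    (hconst : ∀ V a, ‖a‖ ≤ 1 → ∀ x ∈ padicBall a N, ∀ y ∈ padicBall a N, ψ V x = ψ V y)
    {k j l : ℕ} {C : Finset P} {a : ℚ_[p]} (hC : IsChain (· ≤ ·) (C : Set P))
    (hk : C.card + k = m) (hj : l + j = N) (ha : ‖a‖ ≤ 1)
    (hlarge : ∀ V ∉ C, IsChain (· ≤ ·) (insert V (C : Set P)) → ∃ x ∈ padicBall a l, ρ V ≤ ψ V x) :
    ν {x ∈ padicBall a l | ¬ IsMarked (ψ · x) ρ ε C} ≤ k * p ^ k * δ * ν (padicBall a l) := by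
  classical
  have hcard {C : Finset P} {V : P} (hV : V ∉ C) (hVC : IsChain (· ≤ ·) (insert V (C : Set P))) :
      IsChain (· ≤ ·) ((insert V C : Finset P) : Set P) ∧ C.card + 1 ≤ m := by
    rw [← Finset.coe_insert] at hVC
    exact ⟨hVC, Finset.card_insert_of_notMem hV ▸ hm _ hVC⟩
  induction k generalizing C j l a with
  | zero =>
    refine measure_not_isMarked_le_of_forall hC fun x _ V hV hVC => ?_
    have := (hcard hV hVC).2
    omega
  | succ k ihk =>
    induction j generalizing l a with
    | zero =>
      refine measure_not_isMarked_le_of_forall hC fun x hx V hV hVC => ?_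
      obtain ⟨y, hy, hρ⟩ := hlarge V hV hVC
      obtain rfl : l = N := hj
      exact hρ.trans_eq (hconst V a ha y hy x hx)
    | succ j ihj =>
      refine measure_padicBall_inter_le ν fun i => ?_
      set b := a + (i : ℚ_[p]) * (p : ℚ_[p]) ^ l
      have hsub : padicBall b (l + 1) ⊆ padicBall a l := padicBall_add_mul_pow_subset a l i
      have hb : ‖b‖ ≤ 1 := mem_closedBall_zero_iff.1 <|
        padicBall_subset_closedBall ha l (hsub (mem_closedBall_self (by positivity)))
      by_cases hlarge' : ∀ V ∉ C, IsChain (· ≤ ·) (insert V (C : Set P)) →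
          ∃ x ∈ padicBall b (l + 1), ρ V ≤ ψ V x
      · exact ihj (by omega) hb hlarge'
      push Not at hlarge'
      obtain ⟨V, hV, hVC, hup⟩ := hlarge'
      refine measure_not_isMarked_le_of_insert hsub (fun x hx => (hup x hx).le)
        (hgood V a l ha (hlarge V hV hVC)) ?_
      refine ihk (hcard hV hVC).1 (by rw [Finset.card_insert_of_notMem hV]; omega) hj ha
        fun W hW hWC => ?_
      rw [Finset.coe_insert] at hWC
      exact hlarge W (fun h => hW (Finset.mem_insert_of_mem h))
        (hWC.mono (Set.insert_subset_insert (Set.subset_insert V _)))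

end Marked

section MarkedCovol

variable {K E : Type*} [DivisionRing K] [AddCommGroup E] [Module K E]

theorem card_le_finrank_add_one_of_isChain [FiniteDimensional K E] {D : Finset (Submodule K E)}
    (hD : IsChain (· ≤ ·) (D : Set (Submodule K E))) : D.card ≤ Module.finrank K E + 1 := by
  have hinj : Set.InjOn (fun V : Submodule K E => Module.finrank K V) D := fun V hV W hW h =>
    (hD.total hV hW).elim (Submodule.eq_of_le_of_finrank_eq · h)
      fun hle => (Submodule.eq_of_le_of_finrank_eq hle h.symm).symm
  simpa using Finset.card_le_card_of_injOn (t := Finset.range (Module.finrank K E + 1)) _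
    (fun V _ => by simpa [Nat.lt_succ_iff] using V.finrank_le) hinj

theorem exists_notMem_isChain_insert_sup_span {D : Finset (Submodule K E)}
    (hD : IsChain (· ≤ ·) (D : Set (Submodule K E))) {w : E} (hw : w ≠ 0) :
    ∃ V, w ∉ V ∧ (V = ⊥ ∨ V ∈ D) ∧
      IsChain (· ≤ ·) (insert (V ⊔ K ∙ w) (D : Set (Submodule K E))) := by
  classical
  have hbot : IsChain (· ≤ ·) (insert ⊥ (D : Set (Submodule K E))) :=
    hD.insert fun W _ _ => Or.inl bot_le
  obtain ⟨V, hV⟩ := (insert ⊥ (D.filter (w ∉ ·))).exists_maximal (Finset.insert_nonempty _ _)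
  have hVD : V = ⊥ ∨ V ∈ D ∧ w ∉ V := by simpa using hV.prop
  have hwV : w ∉ V := by
    obtain rfl | h := hVD
    · simpa using hw
    · exact h.2
  have hV' : V = ⊥ ∨ V ∈ D := hVD.imp_right And.left
  refine ⟨V, hwV, hV', hD.insert fun W hW _ => ?_⟩
  have htotal : V ≤ W ∨ W ≤ V := hbot.total (by simpa using hV') (Or.inr hW)
  by_cases hwW : w ∈ W
  · have hVW : V ≤ W := htotal.resolve_right fun h => hwV (h hwW)
    exact Or.inl (sup_le hVW ((Submodule.span_singleton_le_iff_mem w W).2 hwW))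
  · have hWmem : W ∈ insert ⊥ (D.filter (w ∉ ·)) := by simp [Finset.mem_coe.1 hW, hwW]
    exact Or.inr ((htotal.elim (hV.le_of_ge hWmem) id).trans le_sup_left)

variable {p} {ι : Type*} [Fintype ι] {T : ℕ} {ℓ : (ι → ℤ) →ₗ[ℤ] ℚ_[p]} {η ε : ℝ} {w : ι → ℤ}

theorem IsMarked.mul_le_card_mul_norm (hη : 0 < η) (hε1 : ε ≤ 1)
    (h : IsMarked (fun V => (covol T ℓ V : ℝ)) (fun V => η ^ Module.finrank ℚ V) ε ∅)
    (hw0 : w ≠ 0) (hw : ‖ℓ w‖ ≤ (p : ℝ) ^ (-(T : ℤ))) : ε * η ≤ Fintype.card ι * ‖w‖ := by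
  obtain ⟨D, -, hD, hpinch, hmax⟩ := h
  obtain ⟨V, hwV, hVD, hchain⟩ := exists_notMem_isChain_insert_sup_span hD
    ((map_ne_zero_iff _ toRat_injective).2 hw0)
  have hup : (covol T ℓ V : ℝ) ≤ η ^ Module.finrank ℚ V := by
    obtain rfl | hV := hVD
    · rw [finrank_bot, pow_zero]
      exact_mod_cast covol_bot_le
    · exact (hpinch V hV (Finset.notMem_empty V)).2
  have hlow : ε * η ^ (Module.finrank ℚ V + 1) ≤ covol T ℓ (V ⊔ ℚ ∙ toRat w) := by
    rw [← Submodule.finrank_sup_span_singleton hwV]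
    by_cases hmem : V ⊔ ℚ ∙ toRat w ∈ D
    · exact (hpinch _ hmem (Finset.notMem_empty _)).1
    · exact (mul_le_of_le_one_left (by positivity) hε1).trans (hmax _ hmem hchain)
  refine le_of_mul_le_mul_right ?_ (pow_pos hη (Module.finrank ℚ V))
  calc ε * η * η ^ Module.finrank ℚ V = ε * η ^ (Module.finrank ℚ V + 1) := by ring
    _ ≤ Fintype.card ι * ‖w‖ * covol T ℓ V := hlow.trans (covol_sup_span_singleton_le hwV hw)
    _ ≤ Fintype.card ι * ‖w‖ * η ^ Module.finrank ℚ V := by gcongr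

end MarkedCovol

/-! ### Linear forms along an analytic curve -/

section Curve

open Filter Topology

variable {p} {ι : Type*} [Fintype ι]

/-- The linear form `q ↦ q · y` on `ℤ^ι`. -/
noncomputable def linearForm (y : ι → ℚ_[p]) : (ι → ℤ) →ₗ[ℤ] ℚ_[p] :=
  Fintype.linearCombination ℤ y

theorem linearForm_apply (y : ι → ℚ_[p]) (q : ι → ℤ) :
    linearForm y q = ∑ i, (q i : ℚ_[p]) * y i := by
  simp [linearForm, Fintype.linearCombination_apply]

theorem norm_linearForm_le (y : ι → ℚ_[p]) (q : ι → ℤ) : ‖linearForm y q‖ ≤ ‖y‖ :=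
  linearForm_apply y q ▸ norm_sum_intCast_mul_le q y

/-- The curve in `ℚ_p^ι` parametrized by the vector-valued power series with coefficients `c`. -/
noncomputable def curve (c : ℕ → ι → ℚ_[p]) (x : ℚ_[p]) (i : ι) : ℚ_[p] :=
  evalSeries (fun k => c k i) x

variable {c : ℕ → ι → ℚ_[p]} {x y : ℚ_[p]}

theorem tendsto_linearForm (hc : Tendsto c atTop (𝓝 0)) (q : ι → ℤ) :
    Tendsto (fun k => linearForm (c k) q) atTop (𝓝 0) :=
  squeeze_zero_norm (fun k => norm_linearForm_le (c k) q)
    (tendsto_zero_iff_norm_tendsto_zero.1 hc)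

theorem linearForm_curve (hc : Tendsto c atTop (𝓝 0)) (hx : ‖x‖ ≤ 1) (q : ι → ℤ) :
    linearForm (curve c x) q = evalSeries (fun k => linearForm (c k) q) x := by
  have hsum (i : ι) : Summable fun k => (q i : ℚ_[p]) * (c k i * x ^ k) :=
    (summable_mul_pow (tendsto_pi_nhds.1 hc i) hx).mul_left _
  simp only [linearForm_apply, curve, evalSeries, Finset.sum_mul, ← tsum_mul_left, mul_assoc]
  exact (Summable.tsum_finsetSum fun i _ => hsum i).symm

theorem norm_linearForm_curve_sub_le {M : ℝ} (hc : Tendsto c atTop (𝓝 0)) (hM : ∀ k, ‖c k‖ ≤ M)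
    (hx : ‖x‖ ≤ 1) (hy : ‖y‖ ≤ 1) (q : ι → ℤ) :
    ‖linearForm (curve c x) q - linearForm (curve c y) q‖ ≤ ‖x - y‖ * M := by
  rw [linearForm_curve hc hx, linearForm_curve hc hy,
    evalSeries_sub_evalSeries (tendsto_linearForm hc q) hx hy, norm_mul]
  gcongr
  exact norm_evalSeries_le (fun j => norm_evalSeries_le
    (fun k => (norm_linearForm_le _ q).trans (hM _)) hy) hx

theorem exists_forall_covol_curve_eq (hc : Tendsto c atTop (𝓝 0)) :
    ∃ m₀ : ℕ, ∀ (T : ℕ) (V : Submodule ℚ (ι → ℚ)) (a : ℚ_[p]), ‖a‖ ≤ 1 →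
      ∀ x ∈ padicBall a (T + m₀), ∀ y ∈ padicBall a (T + m₀),
        covol T (linearForm (curve c x)) V = covol T (linearForm (curve c y)) V := by
  have hp : (1 : ℝ) < p := mod_cast (Fact.out : p.Prime).one_lt
  obtain ⟨M, hM⟩ := (Metric.isBounded_range_of_tendsto c hc).exists_norm_le
  obtain ⟨m₀, hm₀⟩ := pow_unbounded_of_one_lt M hp
  refine ⟨m₀, fun T V a ha x hx y hy => covol_congr fun q => ?_⟩
  have hunit {z : ℚ_[p]} (hz : z ∈ padicBall a (T + m₀)) : ‖z‖ ≤ 1 :=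
    mem_closedBall_zero_iff.1 (padicBall_subset_closedBall ha _ hz)
  have hxy : ‖x - y‖ ≤ (p : ℝ) ^ (-((T + m₀ : ℕ) : ℤ)) := by
    rw [← dist_eq_norm]
    exact (dist_triangle_max x a y).trans (max_le hx (dist_comm a y ▸ hy))
  calc ‖linearForm (curve c x) q - linearForm (curve c y) q‖
      ≤ ‖x - y‖ * (p : ℝ) ^ m₀ :=
        norm_linearForm_curve_sub_le hc (fun k => (hM _ ⟨k, rfl⟩).trans hm₀.le)
          (hunit hx) (hunit hy) q
    _ ≤ (p : ℝ) ^ (-((T + m₀ : ℕ) : ℤ)) * (p : ℝ) ^ m₀ := by gcongr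
    _ = (p : ℝ) ^ (-(T : ℤ)) := by
        rw [← zpow_natCast, ← zpow_add₀ (by positivity)]
        congr 1
        omega

variable (ν : Measure ℚ_[p]) [ν.IsAddLeftInvariant]

theorem exists_forall_measure_covol_curve_lt_le (hc : Tendsto c atTop (𝓝 0)) :
    ∃ D : ℕ, ∀ (s T : ℕ) (V : Submodule ℚ (ι → ℚ)) (ρ : ℝ) (a : ℚ_[p]) (l : ℕ), ‖a‖ ≤ 1 →
      (∃ x ∈ padicBall a l, ρ ≤ covol T (linearForm (curve c x)) V) →
      ν {x ∈ padicBall a l |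
          covol T (linearForm (curve c x)) V < ((p : ℝ) ^ (s * D + 1))⁻¹ * ρ} ≤
        D * ((p : ℝ≥0∞) ^ s)⁻¹ * ν (padicBall a l) := by
  have hp : (1 : ℝ) ≤ p := mod_cast (Fact.out : p.Prime).one_le
  obtain ⟨D, hD⟩ := exists_forall_hasWeierstrassDegree (K := ℚ_[p]) hc
  refine ⟨D, fun s T V ρ a l ha ⟨x₁, hx₁, hρ⟩ => ?_⟩
  have hunit {z : ℚ_[p]} (hz : z ∈ padicBall a l) : ‖z‖ ≤ 1 :=
    mem_closedBall_zero_iff.1 (padicBall_subset_closedBall ha _ hz)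
  obtain ⟨q, hq⟩ := exists_norm_lt_of_covol_lt hρ
    (inv_pos.2 (by positivity : 0 < (p : ℝ) ^ (s * D + 1)))
    (inv_le_one_of_one_le₀ (one_le_pow₀ hp))
  have hdeg : (∀ k, linearForm (c k) q = 0) ∨
      ∃ r ≤ D, HasWeierstrassDegree (fun k => linearForm (c k) q) r := by
    simpa [Fintype.linearCombination_apply, linearForm_apply, mul_comm] using
      hD (Fintype.linearCombination ℚ_[p] fun i => (q i : ℚ_[p]))
  refine (measure_mono ?_).trans (measure_norm_evalSeries_lt_le ν hdeg ha hx₁ s)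
  rintro x ⟨hx, hlt⟩
  refine ⟨hx, ?_⟩
  rw [← linearForm_curve hc (hunit hx), ← linearForm_curve hc (hunit hx₁)]
  exact hq _ hlt

theorem exists_forall_measure_exists_small_le [Nonempty ι] (hc : Tendsto c atTop (𝓝 0)) :
    ∃ D : ℕ, ∀ (s T : ℕ) (η : ℝ), 0 < η →
      (∀ q ≠ 0, ‖linearForm (curve c 0) q‖ ≤ (p : ℝ) ^ (-(T : ℤ)) → η ≤ ‖q‖) →
      ν {x ∈ padicBall 0 0 | ∃ w ≠ 0, ‖linearForm (curve c x) w‖ ≤ (p : ℝ) ^ (-(T : ℤ)) ∧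
          Fintype.card ι * ‖w‖ < ((p : ℝ) ^ (s * D + 1))⁻¹ * (η / Fintype.card ι)} ≤
        (Fintype.card ι + 1 : ℕ) * p ^ (Fintype.card ι + 1) * (D * ((p : ℝ≥0∞) ^ s)⁻¹) *
          ν (padicBall 0 0) := by
  have hp : (1 : ℝ) ≤ p := mod_cast (Fact.out : p.Prime).one_le
  obtain ⟨D, hD⟩ := exists_forall_measure_covol_curve_lt_le ν hc
  obtain ⟨m₀, hm₀⟩ := exists_forall_covol_curve_eq hc
  refine ⟨D, fun s T η hη h => ?_⟩
  have hη' : 0 < η / Fintype.card ι := div_pos hη (mod_cast Fintype.card_pos)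
  refine (measure_mono ?_).trans (measure_not_isMarked_le (ν := ν) (a := 0) (l := 0) (C := ∅)
    (ψ := fun V x => (covol T (linearForm (curve c x)) V : ℝ))
    (ρ := fun V => (η / Fintype.card ι) ^ Module.finrank ℚ V)
    (ε := ((p : ℝ) ^ (s * D + 1))⁻¹) (fun C hC => ?_) (fun V => hD s T V _)
    (fun V a ha x hx y hy => congrArg _ (hm₀ T V a ha x hx y hy)) (by simp) (zero_add _)
    (zero_add _) (by simp) fun V _ _ => ?_)
  · rintro x ⟨hx, w, hw₀, hw, hlt⟩
    exact ⟨hx, fun hM => hlt.not_ge (hM.mul_le_card_mul_norm hη'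
      (inv_le_one_of_one_le₀ (one_le_pow₀ hp)) hw₀ hw)⟩
  · simpa using card_le_finrank_add_one_of_isChain hC
  · exact ⟨0, mem_closedBall_self (by positivity), pow_finrank_le_covol hη.le h⟩

theorem ae_eventually_notMem_of_le_mul_pow {X : Type*} [MeasurableSpace X] {μ : Measure X}
    {A : ℕ → Set X} {C r : ℝ≥0∞} (hC : C ≠ ∞) (hr : r < 1)
    (hA : ∀ᶠ s in atTop, μ (A s) ≤ C * r ^ s) : ∀ᵐ x ∂μ, ∀ᶠ s in atTop, x ∉ A s := by
  obtain ⟨s₀, hs₀⟩ := eventually_atTop.1 hA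
  have hsum : ∑' s, μ (A (s + s₀)) ≠ ∞ := by
    refine ne_top_of_le_ne_top ?_ (ENNReal.tsum_le_tsum fun s => hs₀ _ (Nat.le_add_left s₀ s))
    simp only [pow_add, ENNReal.tsum_mul_left, ENNReal.tsum_mul_right, ENNReal.tsum_geometric]
    exact ENNReal.mul_ne_top hC (ENNReal.mul_ne_top (ENNReal.inv_ne_top.2 (tsub_pos_of_lt hr).ne')
      (ENNReal.pow_ne_top hr.ne_top))
  filter_upwards [ae_eventually_notMem hsum] with x hx
  rwa [← map_add_atTop_eq_nat s₀, eventually_map]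

theorem exists_forall_ae_eventually_le_norm [Nonempty ι] [IsFiniteMeasureOnCompacts ν]
    (hc : Tendsto c atTop (𝓝 0)) :
    ∃ D : ℕ, ∀ (T : ℕ → ℕ) (η : ℕ → ℝ), (∀ s, 0 < η s) →
      (∀ᶠ s in atTop, ∀ q ≠ 0,
        ‖linearForm (curve c 0) q‖ ≤ (p : ℝ) ^ (-(T s : ℤ)) → η s ≤ ‖q‖) →
      ∀ᵐ x ∂ν, x ∈ padicBall 0 0 → ∀ᶠ s in atTop, ∀ w ≠ 0,
        ‖linearForm (curve c x) w‖ ≤ (p : ℝ) ^ (-(T s : ℤ)) →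
          ((p : ℝ) ^ (s * D + 1))⁻¹ * (η s / Fintype.card ι) ≤ Fintype.card ι * ‖w‖ := by
  obtain ⟨D, hD⟩ := exists_forall_measure_exists_small_le ν hc
  refine ⟨D, fun T η hη h => ?_⟩
  have hball : ν (padicBall 0 0) ≠ ∞ := (isCompact_closedBall _ _).measure_ne_top
  have hC : (Fintype.card ι + 1 : ℕ) * (p : ℝ≥0∞) ^ (Fintype.card ι + 1) * D *
      ν (padicBall 0 0) ≠ ∞ := by finiteness
  have hp : (p : ℝ≥0∞)⁻¹ < 1 := ENNReal.inv_lt_one.2 (mod_cast (Fact.out : p.Prime).one_lt)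
  have hae := ae_eventually_notMem_of_le_mul_pow hC hp (h.mono fun s hs =>
    (hD s (T s) (η s) (hη s) hs).trans_eq (by rw [ENNReal.inv_pow]; ring))
  filter_upwards [hae] with x hx hx₀
  filter_upwards [hx] with s hs w hw₀ hw
  exact not_lt.1 fun hlt => hs ⟨hx₀, w, hw₀, hw, hlt⟩

end Curve

/-! ### Well approximable points on an analytic curve -/

section ApproxSet

open Filter Topology

variable {p} {ι : Type*} [Fintype ι]

/-- The integer vectors at which `ℓ` is as small as exponent `u` requires. -/
def approxSet (ℓ : (ι → ℤ) →ₗ[ℤ] ℚ_[p]) (u : ℝ) : Set (ι → ℤ) :=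
  {q | ‖ℓ q‖ ≤ ‖q‖ ^ (-u)}

variable {ℓ : (ι → ℤ) →ₗ[ℤ] ℚ_[p]} {u v : ℝ}

theorem one_le_norm_of_ne_zero {q : ι → ℤ} (hq : q ≠ 0) : 1 ≤ ‖q‖ := by
  obtain ⟨i, hi⟩ := Function.ne_iff.1 hq
  have habs : (1 : ℝ) ≤ ‖q i‖ := Int.norm_eq_abs _ ▸ mod_cast Int.one_le_abs hi
  exact habs.trans (norm_le_pi_norm q i)

theorem approxSet_subset_approxSet (huv : u ≤ v) : approxSet ℓ v ⊆ insert 0 (approxSet ℓ u) := by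
  intro q hq
  obtain rfl | hq₀ := eq_or_ne q 0
  · exact Set.mem_insert _ _
  · exact Or.inr (le_trans hq (Real.rpow_le_rpow_of_exponent_le (one_le_norm_of_ne_zero hq₀)
      (neg_le_neg huv)))

theorem finite_approxSet_of_le (h : (approxSet ℓ u).Finite) (huv : u ≤ v) :
    (approxSet ℓ v).Finite :=
  (h.insert 0).subset (approxSet_subset_approxSet huv)

theorem apply_ne_zero_of_mem_approxSet (h : (approxSet ℓ v).Finite) {q : ι → ℤ} (hq : q ≠ 0) :
    ℓ q ≠ 0 := by
  intro hℓ
  refine Set.infinite_of_injective_forall_mem (smul_left_injective ℤ hq) (fun k => ?_) h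
  simp only [approxSet, Set.mem_ofPred_eq, map_smul, hℓ, smul_zero, norm_zero]
  positivity

theorem eventually_rpow_le_norm_of_finite_approxSet (hv : 0 < v) (h : (approxSet ℓ v).Finite) :
    ∀ᶠ T : ℕ in atTop, ∀ q ≠ 0, ‖ℓ q‖ ≤ (p : ℝ) ^ (-(T : ℤ)) → ((p : ℝ) ^ T) ^ (1 / v) ≤ ‖q‖ := by
  have hp : 1 < (p : ℝ) := mod_cast (Fact.out : p.Prime).one_lt
  have hpow : Tendsto (fun T : ℕ => (p : ℝ) ^ (-(T : ℤ))) atTop (𝓝 0) := by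
    simpa [zpow_neg] using tendsto_pow_atTop_nhds_zero_of_lt_one (by positivity)
      (inv_lt_one_of_one_lt₀ hp)
  have hexc : ∀ᶠ T : ℕ in atTop, ∀ q ∈ approxSet ℓ v, q ≠ 0 → (p : ℝ) ^ (-(T : ℤ)) < ‖ℓ q‖ := by
    refine (eventually_all_finite h).2 fun q _ => ?_
    by_cases hq : q = 0
    · exact .of_forall fun _ h => absurd hq h
    · filter_upwards [hpow.eventually_lt_const
        (norm_pos_iff.2 (apply_ne_zero_of_mem_approxSet h hq))] with T hT _ using hT
  filter_upwards [hexc] with T hT q hq hℓ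
  have hqpos : 0 < ‖q‖ := norm_pos_iff.2 hq
  have hlt : ‖q‖ ^ (-v) < (p : ℝ) ^ (-(T : ℤ)) :=
    (not_le.1 fun hmem => (hT q hmem hq).not_ge hℓ).trans_le hℓ
  rw [Real.rpow_neg hqpos.le, zpow_neg, zpow_natCast,
    inv_lt_inv₀ (by positivity) (by positivity)] at hlt
  rw [one_div, Real.rpow_inv_le_iff_of_pos (by positivity) hqpos.le hv]
  exact hlt.le

theorem finite_approxSet_of_eventually_lt_norm {R : ℝ} (hR : 1 < R) (hu : 0 < u)
    (h : ∀ᶠ s : ℕ in atTop, ∀ q ≠ 0, ‖ℓ q‖ ≤ (R ^ s)⁻¹ → (R ^ (s + 1)) ^ (1 / u) < ‖q‖) :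
    (approxSet ℓ u).Finite := by
  obtain ⟨s₀, hs₀⟩ := eventually_atTop.1 h
  refine (isCompact_closedBall (0 : ι → ℤ) ((R ^ s₀) ^ (1 / u))).finite_of_discrete.subset
    fun q hq => mem_closedBall_zero_iff.2 ?_
  obtain rfl | hq₀ := eq_or_ne q 0
  · rw [norm_zero]
    positivity
  have hq₁ := one_le_norm_of_ne_zero hq₀
  have hqpos := norm_nonneg q
  obtain ⟨s, hle, hlt⟩ := exists_nat_pow_near (Real.one_le_rpow hq₁ hu.le) hR
  have hsmall : ‖ℓ q‖ ≤ (R ^ s)⁻¹ := by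
    refine le_trans hq ?_
    rw [Real.rpow_neg hqpos]
    exact inv_anti₀ (by positivity) hle
  have hupper : ‖q‖ ≤ (R ^ (s + 1)) ^ (1 / u) := by
    rw [one_div, Real.le_rpow_inv_iff_of_pos hqpos (by positivity) hu]
    exact hlt.le
  have hs : s < s₀ := not_le.1 fun hs => (hs₀ s hs q hq₀ hsmall).not_ge hupper
  refine hupper.trans ?_
  gcongr
  exacts [hR.le, hs]

/-- If `b ^ N` is the ratio of consecutive scales, then the factor `b ^ (s * D)` lost at the `s`-th
scale is absorbed by the gap between the exponents `1 / u` and `1 / v` once `N` is large. -/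
theorem exists_eventually_mul_rpow_lt_div {b : ℝ} (hb : 1 < b) (hv : 0 < v) (huv : v < u) (D : ℕ)
    {m : ℝ} (hm : 0 < m) :
    ∃ N ≠ 0, ∀ᶠ s : ℕ in atTop, m * (((b ^ N) ^ (s + 1)) ^ (1 / u)) <
      (b ^ (s * D + 1))⁻¹ * (((b ^ N) ^ s) ^ (1 / v) / m) := by
  have hgap : 0 < 1 / v - 1 / u := sub_pos.2 (one_div_lt_one_div_of_lt hv huv)
  obtain ⟨N, hN⟩ := exists_nat_gt (D / (1 / v - 1 / u))
  rw [div_lt_iff₀ hgap] at hN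
  refine ⟨N, ?_, ?_⟩
  · rintro rfl
    rw [Nat.cast_zero, zero_mul] at hN
    exact hN.not_ge (Nat.cast_nonneg D)
  have hb₀ : 0 < b := zero_lt_one.trans hb
  set A : ℝ := (b ^ N) ^ (1 / v)
  set B : ℝ := (b ^ N) ^ (1 / u)
  have hratio : b ^ D * B < A := by
    simp only [A, B, ← Real.rpow_natCast, ← Real.rpow_mul hb₀.le, ← Real.rpow_add hb₀]
    exact Real.rpow_lt_rpow_of_exponent_lt hb (by linarith)
  have hlim : Tendsto (fun s : ℕ => m ^ 2 * b * B * (b ^ D * B / A) ^ s) atTop (𝓝 0) := by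
    simpa using (tendsto_pow_atTop_nhds_zero_of_lt_one (by positivity)
      ((div_lt_one (by positivity)).2 hratio)).const_mul (m ^ 2 * b * B)
  filter_upwards [hlim.eventually_lt_const one_pos] with s hs
  rw [div_pow, ← mul_div_assoc, div_lt_one (by positivity), mul_pow, ← pow_mul] at hs
  have hbN : 0 ≤ b ^ N := by positivity
  rw [← Real.rpow_pow_comm hbN, ← Real.rpow_pow_comm hbN, inv_mul_eq_div,
    lt_div_iff₀ (by positivity), lt_div_iff₀ hm]
  calc m * B ^ (s + 1) * b ^ (s * D + 1) * m = m ^ 2 * b * B * (b ^ (D * s) * B ^ s) := by ring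
    _ < A ^ s := hs

theorem ae_finite_approxSet_curve [Nonempty ι] {c : ℕ → ι → ℚ_[p]} (hc : Tendsto c atTop (𝓝 0))
    (hv : 0 < v) (huv : v < u) (h : (approxSet (linearForm (curve c 0)) v).Finite)
    (ν : Measure ℚ_[p]) [ν.IsAddLeftInvariant] [IsFiniteMeasureOnCompacts ν] :
    ∀ᵐ x ∂ν, ‖x‖ ≤ 1 → (approxSet (linearForm (curve c x)) u).Finite := by
  have hp : 1 < (p : ℝ) := mod_cast (Fact.out : p.Prime).one_lt
  have hm : (0 : ℝ) < Fintype.card ι := mod_cast Fintype.card_pos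
  obtain ⟨D, hD⟩ := exists_forall_ae_eventually_le_norm ν hc
  obtain ⟨N, hN, hgrowth⟩ := exists_eventually_mul_rpow_lt_div hp hv huv D hm
  have hscale : Tendsto (N * · : ℕ → ℕ) atTop atTop := tendsto_id.const_mul_atTop' hN.bot_lt
  have hlow := hscale.eventually (eventually_rpow_le_norm_of_finite_approxSet hv h)
  filter_upwards [hD (N * ·) (fun s => ((p : ℝ) ^ (N * s)) ^ (1 / v)) (fun s => by positivity) hlow]
    with x hx hx₁
  refine finite_approxSet_of_eventually_lt_norm (one_lt_pow₀ hp hN) (hv.trans huv) ?_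
  filter_upwards [hx (by simpa [padicBall] using hx₁), hgrowth] with s hs hlt q hq hℓ
  have hle := hs q hq (by rwa [zpow_neg, zpow_natCast, pow_mul])
  rw [pow_mul] at hle
  exact lt_of_mul_lt_mul_left (hlt.trans_le hle) hm.le

end ApproxSet

/-! ### The Diophantine exponent -/

section Exponent

open Filter Topology

theorem supNormZ_eq_norm_cons {n : ℕ} (q₀ : ℤ) (q : Fin n → ℤ) :
    supNormZ q₀ q = ‖(Fin.cons q₀ q : Fin (n + 1) → ℤ)‖ := by
  have hle := norm_le_pi_norm (Fin.cons q₀ q : Fin (n + 1) → ℤ)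
  simp only [supNormZ, ← Int.norm_eq_abs]
  refine le_antisymm (max_le (hle 0) (Real.iSup_le (fun i => hle i.succ) (norm_nonneg _)))
    ((pi_norm_le_iff_of_nonneg (le_max_of_le_left (norm_nonneg _))).2 fun i => ?_)
  induction i using Fin.cases with
  | zero => exact le_max_left _ _
  | succ i =>
    exact le_max_of_le_right
      (le_ciSup (f := fun i => ‖q i‖) (Set.finite_range _).bddAbove i)

variable {p} {n : ℕ} {y : Fin n → ℚ_[p]}

theorem infinite_setOf_norm_le_iff {v : ℝ} :
    {qq : ℤ × (Fin n → ℤ) | ‖((qq.1 : ℚ_[p]) + ∑ i, (qq.2 i : ℚ_[p]) * y i)‖ ≤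
      (supNormZ qq.1 qq.2) ^ (-v)}.Infinite ↔
      (approxSet (linearForm (Fin.cons 1 y : Fin (n + 1) → ℚ_[p])) v).Infinite := by
  rw [← Set.infinite_image_iff (Fin.consEquiv fun _ : Fin (n + 1) => ℤ).injective.injOn,
    Equiv.image_eq_preimage_symm]
  congr! 1
  ext q
  cases q using Fin.consCases with
  | _ q₀ q => simp [approxSet, linearForm_apply, Fin.sum_univ_succ, supNormZ_eq_norm_cons]

theorem wExp_le_iff {w : ℝ≥0∞} : wExp p y ≤ w ↔ ∀ r : ℚ, w < ENNReal.ofReal r →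
    (approxSet (linearForm (Fin.cons 1 y : Fin (n + 1) → ℚ_[p])) r).Finite := by
  simp only [wExp, infinite_setOf_norm_le_iff]
  constructor
  · intro h r hr
    by_contra hinf
    exact hr.not_ge ((le_iSup₂_of_le (r : ℝ) ⟨ENNReal.ofReal_pos.1 (bot_le.trans_lt hr), hinf⟩
      le_rfl).trans h)
  · refine fun h => iSup₂_le fun v hv => le_of_not_gt fun hlt => ?_
    obtain ⟨r, -, hwr, hrv⟩ := ENNReal.lt_iff_exists_rat_btwn.1 hlt
    exact hv.2 (finite_approxSet_of_le (h r hwr) ((ENNReal.ofReal_lt_ofReal_iff hv.1).1 hrv).le)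

theorem measurable_wExp : Measurable (wExp p : (Fin n → ℚ_[p]) → ℝ≥0∞) := by
  refine measurable_of_Iic fun w => ?_
  have heq : wExp p ⁻¹' Set.Iic w = ⋂ (r : ℚ) (_ : w < ENNReal.ofReal r),
      ⋃ F : Finset (Fin (n + 1) → ℤ), ⋂ q ∉ F, {y : Fin n → ℚ_[p] |
        q ∉ approxSet (linearForm (Fin.cons 1 y : Fin (n + 1) → ℚ_[p])) r} := by
    ext y
    simp only [Set.mem_preimage, Set.mem_Iic, wExp_le_iff, Set.mem_iInter, Set.mem_iUnion,
      Set.mem_ofPred_eq, not_imp_not]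
    exact forall₂_congr fun r _ => ⟨fun h => ⟨h.toFinset, fun q => h.mem_toFinset.2⟩,
      fun ⟨F, hF⟩ => F.finite_toSet.subset hF⟩
  rw [heq]
  refine .iInter fun r => .iInter fun _ => .iUnion fun F => .iInter fun q => .iInter fun _ => ?_
  refine (IsClosed.measurableSet ?_).compl
  simp only [approxSet, linearForm_apply, Fin.sum_univ_succ, Fin.cons_zero, Fin.cons_succ]
  exact isClosed_le (by fun_prop) continuous_const

variable {E : Type*} [NormedAddCommGroup E] [NormedSpace ℚ_[p] E] {f : E → Fin n → ℚ_[p]}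
  {P : FormalMultilinearSeries ℚ_[p] E (Fin n → ℚ_[p])} {x₀ e : E} {R : ℝ≥0∞}

theorem smul_mem_eball {t : ℚ_[p]} (ht : ‖t‖ ≤ 1) (he : e ∈ eball 0 R) : t • e ∈ eball 0 R := by
  have ht' : ‖t‖ₑ ≤ 1 := by rwa [← ofReal_norm, ENNReal.ofReal_le_one]
  rw [mem_eball, edist_zero_right] at he ⊢
  rw [enorm_smul]
  exact (mul_le_of_le_one_left zero_le ht').trans_lt he

theorem exists_curve_eq_cons (hf : HasFPowerSeriesOnBall f P x₀ R) (he : e ∈ eball 0 R) :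
    ∃ c : ℕ → Fin (n + 1) → ℚ_[p], Tendsto c atTop (𝓝 0) ∧
      ∀ t : ℚ_[p], ‖t‖ ≤ 1 → curve c t = Fin.cons 1 (f (x₀ + t • e)) := by
  refine ⟨fun k => Fin.cons ((Pi.single 0 1 : ℕ → ℚ_[p]) k) (P k fun _ => e), ?_, fun t ht => ?_⟩
  · refine tendsto_pi_nhds.2 (Fin.cases ?_ fun i => ?_)
    · refine tendsto_const_nhds.congr' ((eventually_gt_atTop 0).mono fun k hk => ?_)
      simp [hk.ne']
    · exact tendsto_pi_nhds.1 (hf.hasSum he).summable.tendsto_atTop_zero i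
  · ext i
    induction i using Fin.cases with
    | zero =>
      rw [curve, evalSeries, tsum_eq_single 0 fun k hk => by simp [hk]]
      simp
    | succ i =>
      rw [Fin.cons_succ, ← (Pi.hasSum.1 (hf.hasSum (smul_mem_eball ht he)) i).tsum_eq, curve,
        evalSeries]
      refine tsum_congr fun k => ?_
      have hsmul := (P k).map_smul_univ (fun _ => t) fun _ => e
      simp only [Finset.prod_const, Finset.card_univ, Fintype.card_fin] at hsmul
      rw [hsmul, Pi.smul_apply, smul_eq_mul, mul_comm, Fin.cons_succ]

theorem ae_wExp_add_smul_le (hf : HasFPowerSeriesOnBall f P x₀ R) (he : e ∈ eball 0 R)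
    (ν : Measure ℚ_[p]) [ν.IsAddLeftInvariant] [IsFiniteMeasureOnCompacts ν] :
    ∀ᵐ t ∂ν, ‖t‖ ≤ 1 → wExp p (f (x₀ + t • e)) ≤ wExp p (f x₀) := by
  obtain ⟨c, hc, hcurve⟩ := exists_curve_eq_cons hf he
  have hrat (r : ℚ) : ∀ᵐ t ∂ν, wExp p (f x₀) < ENNReal.ofReal r → ‖t‖ ≤ 1 →
      (approxSet (linearForm (curve c t)) r).Finite := by
    refine ae_all_iff.2 fun hr => ?_
    obtain ⟨r', -, hwr', hr'r⟩ := ENNReal.lt_iff_exists_rat_btwn.1 hr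
    have hr'₀ : 0 < (r' : ℝ) := ENNReal.ofReal_pos.1 (bot_le.trans_lt hwr')
    have hr₀ : 0 < (r : ℝ) := ENNReal.ofReal_pos.1 (bot_le.trans_lt hr)
    refine ae_finite_approxSet_curve hc hr'₀ ((ENNReal.ofReal_lt_ofReal_iff hr₀).1 hr'r) ?_ ν
    rw [hcurve 0 (by simp), zero_smul, add_zero]
    exact wExp_le_iff.1 le_rfl r' hwr'
  filter_upwards [ae_all_iff.2 hrat] with t ht ht₁
  rw [wExp_le_iff, ← hcurve t ht₁]
  exact fun r hr => ht r hr ht₁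

end Exponent

/-! ### From lines to a neighbourhood -/

section AlmostEverywhere

open Filter Topology

section Scaling

variable {𝕜 E : Type*} [NontriviallyNormedField 𝕜] [NormedAddCommGroup E] [NormedSpace 𝕜 E]
  [LocallyCompactSpace E] [SecondCountableTopology E] [MeasurableSpace E] [BorelSpace E]
  {μ : Measure E} [μ.IsAddHaarMeasure]

theorem ae_of_ae_smul {Q : E → Prop} {t : 𝕜} (ht : t ≠ 0) (h : ∀ᵐ e ∂μ, Q (t • e)) :
    ∀ᵐ e ∂μ, Q e := by
  let L : E ≃L[𝕜] E := ContinuousLinearEquiv.smulLeft (Units.mk0 t ht)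
  have : (μ.map L.symm).IsAddHaarMeasure := L.symm.isAddHaarMeasure_map μ
  have hac : μ.map L.symm ≪ μ := Measure.absolutelyContinuous_isAddHaarMeasure _ _
  have hmap := ae_of_ae_map L.symm.continuous.measurable.aemeasurable (hac.ae_le h)
  exact hmap.mono fun e he => L.apply_symm_apply e ▸ he

theorem ae_of_forall_ae_smul [MeasurableSpace 𝕜] [MeasurableSMul₂ 𝕜 E] {ν : Measure 𝕜}
    [SFinite ν] {A : Set 𝕜} {Q : E → Prop} (hA : MeasurableSet A)
    (hQ : MeasurableSet {e | Q e}) (hν : ν A ≠ 0) (h0 : (0 : 𝕜) ∉ A)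
    (h : ∀ e, ∀ᵐ t ∂ν, t ∈ A → Q (t • e)) : ∀ᵐ e ∂μ, Q e := by
  have hmeas : MeasurableSet {z : E × 𝕜 | z.2 ∈ A → Q (z.2 • z.1)} :=
    (measurable_snd hA).imp ((measurable_snd.smul measurable_fst) hQ)
  have hae : ∀ᵐ t ∂ν, ∀ᵐ e ∂μ, t ∈ A → Q (t • e) :=
    (Measure.ae_ae_comm hmeas).1 (.of_forall h)
  obtain ⟨t, htA, ht⟩ : ∃ t ∈ A, ∀ᵐ e ∂μ, t ∈ A → Q (t • e) :=
    ((frequently_ae_mem_iff.2 hν).and_eventually hae).exists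
  exact ae_of_ae_smul (ne_of_mem_of_not_mem htA h0) (ht.mono fun e he => he htA)

end Scaling

variable {p} {n : ℕ}

theorem measure_sphere_zero_one_ne_zero (ν : Measure ℚ_[p]) [ν.IsOpenPosMeasure] :
    ν (sphere 0 1) ≠ 0 :=
  ((IsUltrametricDist.isOpen_sphere 0 one_ne_zero).measure_pos ν ⟨1, by simp⟩).ne'

theorem ae_wExp_le_of_hasFPowerSeriesOnBall {E : Type*} [NormedAddCommGroup E]
    [NormedSpace ℚ_[p] E] [LocallyCompactSpace E] [SecondCountableTopology E] [MeasurableSpace E]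
    [BorelSpace E] {f : E → Fin n → ℚ_[p]}
    {P : FormalMultilinearSeries ℚ_[p] E (Fin n → ℚ_[p])} {x₀ : E} {R : ℝ≥0∞}
    (hf : HasFPowerSeriesOnBall f P x₀ R) (μ : Measure E) [μ.IsAddHaarMeasure] :
    ∀ᵐ x ∂μ, x ∈ eball x₀ R → wExp p (f x) ≤ wExp p (f x₀) := by
  classical
  let Q (e : E) : Prop := e ∈ eball 0 R → wExp p (f (x₀ + e)) ≤ wExp p (f x₀)
  let g : E → Fin n → ℚ_[p] := (eball x₀ R).piecewise f fun _ => f x₀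
  have hg : Measurable g :=
    hf.continuousOn.measurable_piecewise continuousOn_const measurableSet_eball
  have hmem (e : E) : e ∈ eball 0 R ↔ x₀ + e ∈ eball x₀ R := by
    simp [mem_eball, edist_eq_enorm_sub]
  have hQ : {e | Q e} = (fun e => wExp p (g (x₀ + e))) ⁻¹' Set.Iic (wExp p (f x₀)) := by
    ext e
    by_cases he : x₀ + e ∈ eball x₀ R <;> simp [Q, g, hmem, he, -mem_eball]
  have hline (e : E) : ∀ᵐ t ∂(Measure.addHaar : Measure ℚ_[p]), t ∈ sphere 0 1 → Q (t • e) := by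
    by_cases he : e ∈ eball 0 R
    · exact (ae_wExp_add_smul_le hf he _).mono fun t ht ht₁ _ =>
        ht (mem_sphere_zero_iff_norm.1 ht₁).le
    · refine .of_forall fun t ht hte => (he ?_).elim
      have ht₁ : ‖t‖ = 1 := mem_sphere_zero_iff_norm.1 ht
      have ht₀ : t ≠ 0 := norm_ne_zero_iff.1 (ht₁ ▸ one_ne_zero)
      exact inv_smul_smul₀ ht₀ e ▸ smul_mem_eball (by simp [ht₁]) hte
  have hQae : ∀ᵐ e ∂μ, Q e := ae_of_forall_ae_smul isClosed_sphere.measurableSet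
    (hQ ▸ (measurable_wExp.comp (hg.comp (measurable_const_add x₀))) measurableSet_Iic)
    (measure_sphere_zero_one_ne_zero Measure.addHaar) (by simp) hline
  refine (eventually_add_left_iff μ x₀).1 ?_
  exact hQae.mono fun e he hx => he ((hmem e).2 hx)

theorem IsChart.mono {d : ℕ} {M : Set (Fin n → ℚ_[p])} {U U' : Set (Fin d → ℚ_[p])}
    {f : (Fin d → ℚ_[p]) → Fin n → ℚ_[p]} (h : IsChart p d n M U f) (hU' : IsOpen U')
    (hsub : U' ⊆ U) : IsChart p d n M U' f := by
  obtain ⟨-, hanal, hinj, himm, hhomeo, W, hW, hMW⟩ := h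
  refine ⟨hU', hanal.mono hsub, hinj.mono hsub, fun x hx => himm x (hsub hx), ?_, ?_⟩
  · intro x hx V hV hxV
    obtain ⟨G, hG, hxG, hGV⟩ := hhomeo x (hsub hx) (V ∩ U') (hV.inter hU') ⟨hxV, hx⟩
    exact ⟨G, hG, hxG, (Set.inter_subset_inter_right G (Set.image_mono hsub)).trans
      (hGV.trans (Set.image_mono Set.inter_subset_left))⟩
  · choose! G hG hxG hGU using fun x (hx : x ∈ U') => hhomeo x (hsub hx) U' hU' hx
    refine ⟨W ∩ ⋃ x ∈ U', G x, hW.inter (isOpen_biUnion hG), ?_⟩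
    rw [← Set.inter_assoc, hMW]
    refine Set.Subset.antisymm ?_ (Set.image_subset_iff.2 fun x hx =>
      ⟨⟨x, hsub hx, rfl⟩, Set.mem_iUnion₂.2 ⟨x, hx, hxG x hx⟩⟩)
    rintro y ⟨hyU, hyG⟩
    obtain ⟨x, hx, hyx⟩ := Set.mem_iUnion₂.1 hyG
    exact Set.image_mono Set.inter_subset_left (hGU x hx ⟨hyx, hyU⟩)

end AlmostEverywhere

theorem statement0_general {n d : ℕ} {M : Set (Fin n → ℚ_[p])}
    (hM : IsAnalyticSubmanifold p d n M) {y₀ : Fin n → ℚ_[p]} (hy₀ : y₀ ∈ M) :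
    ∃ (U : Set (Fin d → ℚ_[p])) (f : (Fin d → ℚ_[p]) → (Fin n → ℚ_[p])),
      IsChart p d n M U f ∧ y₀ ∈ f '' U ∧
      ∀ (μ : Measure (Fin d → ℚ_[p])), μ.IsAddHaarMeasure →
        ∀ᵐ x ∂μ, x ∈ U → wExp p (f x) ≤ wExp p y₀ := by
  obtain ⟨U, f, hchart, x₀, hx₀, rfl⟩ := hM.2 y₀ hy₀
  obtain ⟨P, R, hP⟩ := hchart.2.1 x₀ hx₀
  refine ⟨U ∩ eball x₀ R, f, hchart.mono (hchart.1.inter isOpen_eball) Set.inter_subset_left,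
    ⟨x₀, ⟨hx₀, mem_eball_self hP.r_pos⟩, rfl⟩, fun μ _ => ?_⟩
  exact (ae_wExp_le_of_hasFPowerSeriesOnBall hP μ).mono fun x hx hxU => hx hxU.2

/-- If `M ⊆ ℚ_p^n` is an analytic submanifold, `v ≥ n + 1` and
`w(y₀) ≤ v` for some `y₀ ∈ M`, then for almost every `y` in a neighbourhood of `y₀`
in `M` (w.r.t. the smooth measure class on `M`) one has `w(y) ≤ v`. -/
theorem statement0 (p : ℕ) [Fact p.Prime] (n d : ℕ) (hn : 1 ≤ n)
    (M : Set (Fin n → ℚ_[p])) (hM : IsAnalyticSubmanifold p d n M)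
    (v : ℝ) (hv : (n : ℝ) + 1 ≤ v)
    (y₀ : Fin n → ℚ_[p]) (hy₀ : y₀ ∈ M)
    (hw : wExp p y₀ ≤ ENNReal.ofReal v) :
    ∃ (U : Set (Fin d → ℚ_[p])) (f : (Fin d → ℚ_[p]) → (Fin n → ℚ_[p])),
      IsChart p d n M U f ∧ y₀ ∈ f '' U ∧
      ∀ (μ : Measure (Fin d → ℚ_[p])), μ.IsAddHaarMeasure →
        ∀ᵐ x ∂μ, x ∈ U → wExp p (f x) ≤ ENNReal.ofReal v := by
  obtain ⟨U, f, hf, hyU, h⟩ := statement0_general p hM hy₀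
  exact ⟨U, f, hf, hyU, fun μ hμ => (h μ hμ).mono fun x hx hxU => (hx hxU).trans hw⟩

end PadicDioph
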